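/- arXiv:2111.03213 — 6 statements merged into one kernel-verified Lean document; each statement's English description precedes it below -/
import Mathlib

section
/- Let 0 ≤ i ≤ k ≤ n and let v ∈ R^{C([n],i)} satisfy P↓_{n,i} v = 0. Then P∨_{n,k} (P↑_{n,i,k} v) = (n − k − i + 1)(k − i) · P↑_{n,i,k} v. -/
/-! The up and down operators satisfy the commutation relation
`P↓_{n,k+1} P↑_{n,k} = P∨_{n,k} + (n - 2k) I` for `k < n` (`down_up`). Entrywise, at `(x, y)`,
it compares the number of `(k+1)`-sets containing `x ∪ y` with the number of `(k-1)`-sets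
contained in `x ∩ y`: for `x = y` these are `n - k` and `k`, and for `x ≠ y` both are `1` or both
are `0`, because `|x ∪ y| + |x ∩ y| = 2k`. Starting from `P∨_{n,i} v = 0`, each further application
of `P↑` then adds `n - 2(i+d)` to the eigenvalue of `P∨` (`upDown_upPathAux`), and
`∑_{e<d} (n - 2(i+e)) = (n - 2i - d + 1) d`. -/

open scoped Classical

/-- The slice `C([n],k)`: vectors in `{0,1}^n` with exactly `k` ones. -/
abbrev Slice (n k : ℕ) :=
  {x : Fin n → Bool // (Finset.univ.filter fun i => x i = true).card = k}

/-- The up operator `P↑_{n,k}`. -/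
noncomputable def upOp (n k : ℕ) : Matrix (Slice n (k + 1)) (Slice n k) ℝ :=
  Matrix.of fun x y => if ∀ i, y.1 i = true → x.1 i = true then (1 : ℝ) else 0

/-- The down operator `P↓_{n,k}` (the transpose of `P↑_{n,k-1}`); it is the zero
matrix for `k = 0`. -/
noncomputable def downOp (n k : ℕ) : Matrix (Slice n (k - 1)) (Slice n k) ℝ :=
  Matrix.of fun x y => if 0 < k ∧ ∀ i, x.1 i = true → y.1 i = true then (1 : ℝ) else 0

noncomputable def upPathAux (n i : ℕ) : (d : ℕ) → Matrix (Slice n (i + d)) (Slice n i) ℝ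
  | 0 => show Matrix (Slice n (i + 0)) (Slice n i) ℝ from (1 : Matrix (Slice n i) (Slice n i) ℝ)
  | d + 1 => upOp n (i + d) * upPathAux n i d

/-- The iterated up operator `P↑_{n,i,k} = P↑_{n,k-1} ⋯ P↑_{n,i}`. -/
noncomputable def upPath (n i k : ℕ) : Matrix (Slice n k) (Slice n i) ℝ :=
  if h : i ≤ k then
    cast (by rw [Nat.add_sub_cancel' h]) (upPathAux n i (k - i))
  else 0

/-- `P∨_{n,k} = P↑_{n,k-1} P↓_{n,k}`. -/
noncomputable def upDown (n k : ℕ) : Matrix (Slice n k) (Slice n k) ℝ :=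
  if h : 1 ≤ k then
    cast (by rw [Nat.sub_add_cancel h]) (upOp n (k - 1) * downOp n k)
  else 0

/-- `P∧_{n,k} = P↓_{n,k+1} P↑_{n,k}`. -/
noncomputable def downUp (n k : ℕ) : Matrix (Slice n k) (Slice n k) ℝ :=
  downOp n (k + 1) * upOp n k

/-- `S ∈ H_{n,k}`: `S ⊆ {1,…,n}`, `|S| ≤ k`, and the `j`-th smallest element
(1-indexed) is at least `2j`. -/
def IsH (n k : ℕ) (S : Finset ℕ) : Prop :=
  S ⊆ Finset.Icc 1 n ∧ S.card ≤ k ∧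
    ∀ j, j < S.card → 2 * (j + 1) ≤ (S.sort (· ≤ ·)).getD j 0

lemma wcast_false {n : ℕ} (x : Fin (n + 1) → Bool) (h : ¬ x (Fin.last n) = true) :
    (Finset.univ.filter fun i : Fin n => x (Fin.castSucc i) = true).card
      = (Finset.univ.filter fun i : Fin (n + 1) => x i = true).card := by
  rw [Finset.card_filter, Finset.card_filter, Fin.sum_univ_castSucc]
  simp [h]

lemma wcast_true {n : ℕ} (x : Fin (n + 1) → Bool) (h : x (Fin.last n) = true) :
    (Finset.univ.filter fun i : Fin n => x (Fin.castSucc i) = true).card + 1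
      = (Finset.univ.filter fun i : Fin (n + 1) => x i = true).card := by
  rw [Finset.card_filter, Finset.card_filter, Fin.sum_univ_castSucc]
  simp [h]

/-- Forgetting the last coordinate of `x` when it equals `0`. -/
def dropLast {n m : ℕ} (x : Slice (n + 1) m) (h : ¬ x.1 (Fin.last n) = true) : Slice n m :=
  ⟨fun i => x.1 (Fin.castSucc i), by
    show (Finset.univ.filter fun i : Fin n => x.1 (Fin.castSucc i) = true).card = m
    rw [wcast_false x.1 h]; exact x.2⟩

/-- Forgetting the last coordinate of `x` when it equals `1`. -/
def dropLastT {n m : ℕ} (x : Slice (n + 1) m) (h : x.1 (Fin.last n) = true) : Slice n (m - 1) :=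
  ⟨fun i => x.1 (Fin.castSucc i), by
    show (Finset.univ.filter fun i : Fin n => x.1 (Fin.castSucc i) = true).card = m - 1
    have h1 := wcast_true x.1 h
    have h2 := x.2
    omega⟩

/-- The vector `χ_{n,S}` on the slice `C([n],|S|)`, defined recursively. -/
noncomputable def chi : (n : ℕ) → (S : Finset ℕ) → Slice n S.card → ℝ
  | 0, _ => fun _ => 1
  | n + 1, S =>
    if hS : n + 1 ∈ S then
      fun x =>
        if hx : x.1 (Fin.last n) = true then
          chi n (S.erase (n + 1)) ⟨(dropLastT x hx).1, by
            show (Finset.univ.filter fun i : Fin n => x.1 (Fin.castSucc i) = true).card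
              = (S.erase (n + 1)).card
            rw [Finset.card_erase_of_mem hS]
            exact (dropLastT x hx).2⟩
        else
          -(∑ y : Slice n (S.erase (n + 1)).card,
              (if ∀ i, y.1 i = true → (dropLast x hx).1 i = true then (1 : ℝ) else 0) *
                chi n (S.erase (n + 1)) y) / ((n : ℝ) + 1 - 2 * S.card + 1)
    else
      fun x =>
        if hx : x.1 (Fin.last n) = true then 0
        else chi n S (dropLast x hx)

/-- The basis vector `P↑_{n,|S|,k} χ_{n,S}` of `R^{C([n],k)}`. -/
noncomputable def basisVec (n k : ℕ) (S : Finset ℕ) : Slice n k → ℝ :=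
  (upPath n S.card k).mulVec (chi n S)

/-- The Fourier coefficient `f̂(S)`, equal to `0` when `S ∉ H_{n,min{k,n-k}}`. -/
noncomputable def fourierSlice (n k : ℕ) (f : Slice n k → ℝ) (S : Finset ℕ) : ℝ :=
  if IsH n (min k (n - k)) S then
    (∑ x, f x * basisVec n k S x) / Real.sqrt (∑ x, basisVec n k S x ^ 2)
  else 0

/-- The Hamming weight of `z ∈ {0,1}^t`. -/
def wt {t : ℕ} (z : Fin t → Bool) : ℕ :=
  (Finset.univ.filter fun i => z i = true).card

/-- The concatenation `x ∘ z ∈ {0,1}^n` of `x ∈ {0,1}^{n-t}` with `z ∈ {0,1}^t`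
(with `z` occupying the last `t` coordinates). -/
def catFun (n t : ℕ) (x : Fin (n - t) → Bool) (z : Fin t → Bool) : Fin n → Bool :=
  fun i =>
    if h : (i : ℕ) < n - t then x ⟨i, h⟩
    else if h2 : (i : ℕ) - (n - t) < t then z ⟨(i : ℕ) - (n - t), h2⟩
    else false

/-- The restriction `f_z : C([n-t], k-|z|) → ℝ`, `f_z(x) = f(x ∘ z)`; it is
(the everywhere-zero function on) the empty function when `|z| > k`. -/
noncomputable def restrict (n k t : ℕ) (f : Slice n k → ℝ) (z : Fin t → Bool) :
    Slice (n - t) (k - wt z) → ℝ :=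
  fun x =>
    if h : (Finset.univ.filter fun i => catFun n t x.1 z i = true).card = k then
      f ⟨catFun n t x.1 z, h⟩
    else 0

/-- The Fourier coefficient `f̂_z(S)` of the restriction `f_z`. -/
noncomputable def fourierSliceRestrict (n k t : ℕ) (f : Slice n k → ℝ) (z : Fin t → Bool)
    (S : Finset ℕ) : ℝ :=
  fourierSlice (n - t) (k - wt z) (restrict n k t f z) S

/-- The adjacency matrix `A_{n,k}` of the Johnson graph. -/
noncomputable def johnsonAdj (n k : ℕ) : Matrix (Slice n k) (Slice n k) ℝ :=
  Matrix.of fun x y =>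
    if (Finset.univ.filter fun i => x.1 i ≠ y.1 i).card = 2 then (1 : ℝ) else 0

/-- The set of coordinates at which `x` equals `1`. -/
def supp {n k : ℕ} (x : Slice n k) : Finset (Fin n) :=
  Finset.univ.filter fun i => x.1 i = true

lemma mem_supp {n k : ℕ} (x : Slice n k) (i : Fin n) : i ∈ supp x ↔ x.1 i = true := by
  simp [supp]

lemma card_supp {n k : ℕ} (x : Slice n k) : (supp x).card = k := x.2

lemma supp_injective {n k : ℕ} : Function.Injective (supp : Slice n k → Finset (Fin n)) := by
  intro x y h
  apply Subtype.ext
  funext i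
  have := congrArg (fun s => i ∈ s) h
  simp only [mem_supp, eq_iff_iff] at this
  exact Bool.eq_iff_iff.mpr this

lemma exists_supp {n k : ℕ} (Z : Finset (Fin n)) (h : Z.card = k) : ∃ z : Slice n k, supp z = Z :=
  ⟨⟨fun i => decide (i ∈ Z), by simpa using h⟩, by ext i; simp [mem_supp]⟩

lemma subset_supp {n k l : ℕ} (x : Slice n k) (y : Slice n l) :
    (∀ i, x.1 i = true → y.1 i = true) ↔ supp x ⊆ supp y := by
  simp [Finset.subset_iff, mem_supp]

lemma down_count {n k : ℕ} (A : Finset (Fin n)) :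
    (Finset.univ.filter fun z : Slice n k => supp z ⊆ A).card = A.card.choose k := by
  rw [← Finset.card_powersetCard]
  refine Finset.card_bij (fun z _ => supp z) ?_ ?_ ?_
  · intro z hz
    simp only [Finset.mem_filter, Finset.mem_univ, true_and] at hz
    exact Finset.mem_powersetCard.mpr ⟨hz, card_supp z⟩
  · intro a _ b _ h
    exact supp_injective h
  · intro Z hZ
    obtain ⟨h1, h2⟩ := Finset.mem_powersetCard.mp hZ
    obtain ⟨z, rfl⟩ := exists_supp Z h2
    exact ⟨z, by simpa using h1, rfl⟩

/-- Supersets of `A` of size `k` correspond, by complementation, to subsets of `Aᶜ` of size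
`n - k`. -/
lemma up_count {n k : ℕ} (hk : k ≤ n) (A : Finset (Fin n)) :
    (Finset.univ.filter fun z : Slice n k => A ⊆ supp z).card
      = (n - A.card).choose (n - k) := by
  have hA : (n - A.card) = Aᶜ.card := by simp [Finset.card_compl]
  rw [hA, ← Finset.card_powersetCard]
  refine Finset.card_bij (fun z _ => (supp z)ᶜ) ?_ ?_ ?_
  · intro z hz
    simp only [Finset.mem_filter, Finset.mem_univ, true_and] at hz
    refine Finset.mem_powersetCard.mpr ⟨Finset.compl_subset_compl.mpr hz, ?_⟩
    simp [Finset.card_compl, card_supp]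
  · intro a _ b _ h
    exact supp_injective (compl_injective h)
  · intro Z hZ
    obtain ⟨h1, h2⟩ := Finset.mem_powersetCard.mp hZ
    obtain ⟨z, hz⟩ := exists_supp (k := k) Zᶜ (by
      rw [Finset.card_compl, h2, Fintype.card_fin]; omega)
    refine ⟨z, ?_, by simp [hz]⟩
    simp only [Finset.mem_filter, Finset.mem_univ, true_and, hz]
    exact Finset.subset_compl_comm.mp h1

lemma downUp_apply {n k : ℕ} (hk : k < n) (x y : Slice n k) :
    downUp n k x y = ((n - (supp x ∪ supp y).card).choose (n - (k + 1)) : ℕ) := by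
  rw [← up_count (k := k + 1) hk]
  have : downUp n k x y = ∑ z : Slice n (k + 1), downOp n (k + 1) x z * upOp n k z y := rfl
  rw [this, Finset.card_filter, Nat.cast_sum]
  refine Finset.sum_congr rfl fun z _ => ?_
  have h1 : downOp n (k + 1) x z = if supp x ⊆ supp z then (1 : ℝ) else 0 :=
    if_congr (by rw [← subset_supp]; exact and_iff_right k.succ_pos) rfl rfl
  have h2 : upOp n k z y = if supp y ⊆ supp z then (1 : ℝ) else 0 :=
    if_congr (subset_supp y z) rfl rfl
  rw [h1, h2]
  by_cases hx : supp x ⊆ supp z <;> by_cases hy : supp y ⊆ supp z <;>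
    simp [Finset.union_subset_iff, hx, hy]

/-- The down operator `P↓_{n,m+1}`, with its row index typed as `Slice n m` rather than the
definitionally equal `Slice n (m + 1 - 1)`, so that it composes with `upOp n m`. -/
noncomputable def downSucc (n m : ℕ) : Matrix (Slice n m) (Slice n (m + 1)) ℝ :=
  downOp n (m + 1)

lemma upDown_succ (n m : ℕ) : upDown n (m + 1) = upOp n m * downSucc n m := by
  rw [upDown, dif_pos (Nat.le_add_left 1 m)]
  rfl

lemma upDown_zero (n : ℕ) : upDown n 0 = 0 := by
  simp [upDown]

lemma upDown_apply {n m : ℕ} (x y : Slice n (m + 1)) :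
    upDown n (m + 1) x y = ((supp x ∩ supp y).card.choose m : ℕ) := by
  rw [← down_count (k := m), upDown_succ]
  have : (upOp n m * downSucc n m) x y
    = ∑ z : Slice n m, upOp n m x z * downSucc n m z y := rfl
  rw [this, Finset.card_filter, Nat.cast_sum]
  refine Finset.sum_congr rfl fun z _ => ?_
  have h1 : downSucc n m z y = if supp z ⊆ supp y then (1 : ℝ) else 0 :=
    if_congr (by rw [← subset_supp]; exact and_iff_right m.succ_pos) rfl rfl
  have h2 : upOp n m x z = if supp z ⊆ supp x then (1 : ℝ) else 0 :=
    if_congr (subset_supp z x) rfl rfl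
  rw [h1, h2]
  by_cases hx : supp z ⊆ supp x <;> by_cases hy : supp z ⊆ supp y <;>
    simp [Finset.subset_inter_iff, hx, hy]

/-- The commutation relation between the up and down operators. -/
lemma down_up {n k : ℕ} (hk : k < n) :
    downUp n k = upDown n k + ((n : ℝ) - 2 * k) • (1 : Matrix (Slice n k) (Slice n k) ℝ) := by
  ext x y
  rw [Matrix.add_apply, Matrix.smul_apply, downUp_apply hk]
  have hcard := Finset.card_union_add_card_inter (supp x) (supp y)
  rw [card_supp, card_supp] at hcard
  obtain ⟨r, rfl⟩ : ∃ r, n = k + (r + 1) := ⟨n - k - 1, by omega⟩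
  have hr : k + (r + 1) - (k + 1) = r := by omega
  have hr' : k + (r + 1) - k = r + 1 := by omega
  rcases k with _ | m
  · have hxy : x = y := supp_injective (by
      rw [Finset.card_eq_zero.mp (card_supp x), Finset.card_eq_zero.mp (card_supp y)])
    have hu : (supp x ∪ supp y).card = 0 := by omega
    rw [upDown_zero, hu, hr, hxy]
    simp
  · rw [upDown_apply]
    by_cases hxy : x = y
    · subst hxy
      rw [Finset.union_self, Finset.inter_self, card_supp, hr, hr']
      simp
      ring
    · have hle : (supp x ∩ supp y).card ≤ m := by
        by_contra hlt
        have hx : supp x ∩ supp y = supp x :=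
          Finset.eq_of_subset_of_card_le Finset.inter_subset_left (by rw [card_supp]; omega)
        have hy : supp x ∩ supp y = supp y :=
          Finset.eq_of_subset_of_card_le Finset.inter_subset_right (by rw [card_supp]; omega)
        exact hxy (supp_injective (hx.symm.trans hy))
      rw [hr, Matrix.one_apply_ne hxy, smul_zero, add_zero]
      rcases hle.eq_or_lt with h | h
      · have : m + 1 + (r + 1) - (supp x ∪ supp y).card = r := by omega
        rw [this, h, Nat.choose_self, Nat.choose_self]
      · have hun := card_finset_fin_le (supp x ∪ supp y)
        have h' : m + 1 + (r + 1) - (supp x ∪ supp y).card < r := by omega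
        rw [Nat.choose_eq_zero_of_lt h, Nat.choose_eq_zero_of_lt h']

lemma upDown_of_down_eq_zero {n i : ℕ} (v : Slice n i → ℝ) (hv : (downOp n i).mulVec v = 0) :
    (upDown n i).mulVec v = 0 := by
  rcases i with _ | m
  · rw [upDown_zero, Matrix.zero_mulVec]
  · have hv' : (downSucc n m).mulVec v = 0 := hv
    rw [upDown_succ, ← Matrix.mulVec_mulVec, hv']
    exact Matrix.mulVec_zero _

lemma upDown_upPathAux {n i : ℕ} (v : Slice n i → ℝ) (hv : (downOp n i).mulVec v = 0) (d : ℕ)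
    (hd : i + d ≤ n) :
    (upDown n (i + d)).mulVec ((upPathAux n i d).mulVec v)
      = (((n : ℝ) - 2 * i - d + 1) * d) • (upPathAux n i d).mulVec v := by
  induction d with
  | zero =>
    have h : (upPathAux n i 0).mulVec v = v := Matrix.one_mulVec v
    rw [h, Nat.cast_zero, mul_zero, zero_smul]
    exact upDown_of_down_eq_zero v hv
  | succ d ih =>
    set w := (upPathAux n i d).mulVec v with hw
    have h1 : (upPathAux n i (d + 1)).mulVec v = (upOp n (i + d)).mulVec w :=
      (Matrix.mulVec_mulVec _ _ _).symm
    have h2 : (upDown n (i + (d + 1))).mulVec ((upOp n (i + d)).mulVec w)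
        = (upOp n (i + d)).mulVec ((downUp n (i + d)).mulVec w) := by
      have h3 : upDown n (i + (d + 1)) = upOp n (i + d) * downSucc n (i + d) :=
        upDown_succ n (i + d)
      rw [h3]
      refine (Matrix.mulVec_mulVec _ _ _).symm.trans ?_
      congr 1
      exact Matrix.mulVec_mulVec _ _ _
    rw [h1, h2, down_up (by omega), Matrix.add_mulVec, ih (by omega), Matrix.smul_mulVec,
      Matrix.one_mulVec, ← add_smul, Matrix.mulVec_smul]
    congr 1
    push_cast
    ring

/-- If `P↓_{n,i} v = 0` then `P↑_{n,i,k} v` is an eigenvector of `P∨_{n,k}` with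
eigenvalue `(n - k - i + 1)(k - i)`. -/
theorem stmt1 (n i k : ℕ) (hik : i ≤ k) (hkn : k ≤ n) (v : Slice n i → ℝ)
    (hv : (downOp n i).mulVec v = 0) :
    (upDown n k).mulVec ((upPath n i k).mulVec v)
      = ((((n : ℝ) - k - i + 1) * ((k : ℝ) - i)) • (upPath n i k).mulVec v) := by
  obtain ⟨d, rfl⟩ := Nat.exists_eq_add_of_le hik
  have hpath : upPath n i (i + d) = upPathAux n i d := by
    have key : ∀ e (he : e = d)
        (h : Matrix (Slice n (i + e)) (Slice n i) ℝ = Matrix (Slice n (i + d)) (Slice n i) ℝ),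
        cast h (upPathAux n i e) = upPathAux n i d := by
      rintro e rfl h
      rfl
    rw [upPath, dif_pos hik]
    exact key _ (Nat.add_sub_cancel_left (n := i) (m := d)) _
  rw [hpath, upDown_upPathAux v hv d hkn]
  congr 1
  push_cast
  ring
end

section
/- Let i ≤ n/2 and let v ∈ R^{C([n],i)} be a nonzero vector with P↓_{n,i} v = 0. Then for i ≤ k ≤ n − i, the squared ℓ₂-norm ratio ‖P↑_{n,i,k} v‖₂² / ‖v‖₂² equals (n − 2i)! (k − i)! / (n − k − i)!, and for k > n − i one has P↑_{n,i,k} v = 0. -/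
/-!
The slices of all levels are put together: a function on `C([n],k)` is extended by zero to all
subsets of `Fin n` (`extend`), where the up and down operators become
`(U f)(S) = ∑_{a ∈ S} f(S \ a)` and `(D f)(S) = ∑_{a ∉ S} f(S ∪ a)`
(`upOp_mulVec`, `downOp_mulVec`). These are adjoint (`sum_upSet_mul`) and satisfy
`DU - UD = n - 2|S|` (`downSet_upSet`), the relations of an `sl₂` representation.

If `w` lives on level `i` and `D w = 0`, the commutation relation gives by induction
`D U^{d+1} w = (d+1)(n-2i-d) U^d w` (`downSet_iterate`), hence by adjointness
`‖U^{d+1} w‖² = (d+1)(n-2i-d) ‖U^d w‖²` (`sum_sq_succ`). Multiplying these factors for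
`d < k - i` gives `(n-2i)! (k-i)! / (n-k-i)!`, and since the factor at `d = n - 2i` is zero, all
later iterates vanish.
-/

open scoped Classical

/-! ### Up and down operators on all subsets -/

/-- The one-step up operator on real functions on all subsets of `Fin n`, all levels at once. -/
def upSet {n : ℕ} (f : Finset (Fin n) → ℝ) (S : Finset (Fin n)) : ℝ :=
  ∑ a ∈ S, f (S.erase a)

/-- The one-step down operator on real functions on all subsets of `Fin n`, the adjoint of
`upSet`. -/
def downSet {n : ℕ} (f : Finset (Fin n) → ℝ) (S : Finset (Fin n)) : ℝ :=
  ∑ a ∈ Sᶜ, f (insert a S)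

/-- The set of ones of a `0/1`-vector. -/
def ones {n : ℕ} (x : Fin n → Bool) : Finset (Fin n) :=
  Finset.univ.filter fun i => x i = true

/-- The point of the slice `C([n],k)` with a given set of `k` ones. -/
noncomputable def ofSet {n k : ℕ} (S : Finset (Fin n)) (h : S.card = k) : Slice n k :=
  ⟨fun i => decide (i ∈ S), by simpa using h⟩

/-- Extension by zero of a function on the slice `C([n],k)` to all subsets of `Fin n`. -/
noncomputable def extend {n k : ℕ} (f : Slice n k → ℝ) (S : Finset (Fin n)) : ℝ :=
  if h : S.card = k then f (ofSet S h) else 0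

/-! ### Passage from slices to subsets -/

lemma mem_ones {n : ℕ} (x : Fin n → Bool) (i : Fin n) : i ∈ ones x ↔ x i = true := by
  simp [ones]

lemma card_ones {n k : ℕ} (x : Slice n k) : (ones x.1).card = k := x.2

lemma ofSet_ones {n k : ℕ} (x : Slice n k) (h : (ones x.1).card = k) :
    ofSet (ones x.1) h = x := by
  apply Subtype.ext
  funext i
  simp [ofSet, mem_ones]

lemma ones_ofSet {n k : ℕ} (S : Finset (Fin n)) (h : S.card = k) :
    ones (ofSet S h).1 = S := by
  ext i
  simp [ofSet, mem_ones]

lemma extend_ones {n k : ℕ} (f : Slice n k → ℝ) (x : Slice n k) :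
    extend f (ones x.1) = f x := by
  rw [extend, dif_pos (card_ones x), ofSet_ones]

lemma extend_eq_zero {n k : ℕ} (f : Slice n k → ℝ) {S : Finset (Fin n)} (h : S.card ≠ k) :
    extend f S = 0 := dif_neg h

/-- A sum over a slice is the sum over all sets for any function vanishing off the slice. -/
lemma sum_slice {n k : ℕ} (F : Finset (Fin n) → ℝ) (hF : ∀ S, S.card ≠ k → F S = 0) :
    ∑ x : Slice n k, F (ones x.1) = ∑ S, F S := by
  have h : ∑ S, F S = ∑ S ∈ Finset.univ.filter (fun S : Finset (Fin n) => S.card = k), F S := by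
    rw [Finset.sum_filter]
    refine Finset.sum_congr rfl fun S _ => ?_
    split_ifs with h
    · rfl
    · exact hF S h
  rw [h]
  refine Finset.sum_bij' (fun x _ => ones x.1) (fun S hS => ofSet S (by simpa using hS))
    ?_ ?_ ?_ ?_ ?_
  · intro x _
    simpa using card_ones x
  · simp
  · intro x _
    exact ofSet_ones x _
  · intro S hS
    exact ones_ofSet S _
  · simp

lemma upOp_mulVec {n k : ℕ} (f : Slice n k → ℝ) (x : Slice n (k + 1)) :
    (upOp n k).mulVec f x = upSet (extend f) (ones x.1) := by
  have h : (upOp n k).mulVec f x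
      = ∑ y : Slice n k, (if ones y.1 ⊆ ones x.1 then extend f (ones y.1) else 0) := by
    simp only [Matrix.mulVec, dotProduct, upOp, Matrix.of_apply, ite_mul, one_mul, zero_mul]
    refine Finset.sum_congr rfl fun y _ => ?_
    rw [extend_ones]
    simp only [Finset.subset_iff, mem_ones]
  rw [h, sum_slice (k := k) (fun S => if S ⊆ ones x.1 then extend f S else 0), upSet]
  · symm
    have hc := card_ones x
    generalize ones x.1 = T at hc ⊢
    have himg : ∑ a ∈ T, extend f (T.erase a) = ∑ S ∈ T.image T.erase, extend f S := by
      rw [Finset.sum_image]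
      exact Finset.erase_injOn T
    rw [himg, ← Finset.sum_filter]
    refine Finset.sum_subset ?_ ?_
    · intro S hS
      obtain ⟨a, _, rfl⟩ := Finset.mem_image.1 hS
      simpa using Finset.erase_subset a T
    · intro S hS hS'
      apply extend_eq_zero
      intro hk
      apply hS'
      have hsub : S ⊆ T := by simpa using hS
      obtain ⟨a, ha⟩ := Finset.card_eq_one.1
        (show (T \ S).card = 1 by rw [Finset.card_sdiff_of_subset hsub]; omega)
      have haT : a ∈ T \ S := by simp [ha]
      refine Finset.mem_image.2 ⟨a, (Finset.mem_sdiff.1 haT).1, ?_⟩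
      rw [Finset.erase_eq, ← ha, Finset.sdiff_sdiff_eq_self hsub]
  · intro S hS
    simp [extend_eq_zero f hS]

lemma downOp_mulVec {n k : ℕ} (f : Slice n (k + 1) → ℝ) (x : Slice n k) :
    (downOp n (k + 1)).mulVec f x = downSet (extend f) (ones x.1) := by
  have h : (downOp n (k + 1)).mulVec f x
      = ∑ y : Slice n (k + 1), (if ones x.1 ⊆ ones y.1 then extend f (ones y.1) else 0) := by
    simp only [Matrix.mulVec, dotProduct, downOp, Matrix.of_apply, ite_mul, one_mul, zero_mul]
    refine Finset.sum_congr rfl fun y _ => ?_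
    rw [extend_ones]
    simp [Finset.subset_iff, mem_ones]
  rw [h, sum_slice (k := k + 1) (fun S => if ones x.1 ⊆ S then extend f S else 0), downSet]
  · symm
    have hc := card_ones x
    generalize ones x.1 = T at hc ⊢
    have himg : ∑ a ∈ Tᶜ, extend f (insert a T)
        = ∑ S ∈ Tᶜ.image (fun a => insert a T), extend f S := by
      rw [Finset.sum_image]
      intro a ha b hb hab
      have h1 : a ∈ insert b T := by
        rw [← show insert a T = insert b T from hab]; exact Finset.mem_insert_self a T
      simpa [Finset.mem_compl.1 (Finset.mem_coe.1 ha)] using h1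
    rw [himg, ← Finset.sum_filter]
    refine Finset.sum_subset ?_ ?_
    · intro S hS
      obtain ⟨a, _, rfl⟩ := Finset.mem_image.1 hS
      simp
    · intro S hS hS'
      apply extend_eq_zero
      intro hk
      apply hS'
      have hsub : T ⊆ S := by simpa using hS
      obtain ⟨a, ha⟩ := Finset.card_eq_one.1
        (show (S \ T).card = 1 by rw [Finset.card_sdiff_of_subset hsub]; omega)
      have haS : a ∈ S \ T := by simp [ha]
      refine Finset.mem_image.2 ⟨a, Finset.mem_compl.2 (Finset.mem_sdiff.1 haS).2, ?_⟩
      rw [Finset.insert_eq, ← ha, Finset.sdiff_union_of_subset hsub]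
  · intro S hS
    simp [extend_eq_zero f hS]

/-! ### Commutation and adjointness -/

/-- The commutation relation `DU - UD = n - 2|S|`: the terms of `DU` and `UD` that remove one
element and add a different one agree, and only the diagonal terms remain. -/
lemma downSet_upSet {n : ℕ} (f : Finset (Fin n) → ℝ) (S : Finset (Fin n)) :
    downSet (upSet f) S = upSet (downSet f) S + ((n : ℝ) - 2 * S.card) * f S := by
  have h1 : downSet (upSet f) S
      = ∑ a ∈ Sᶜ, (f S + ∑ b ∈ S, f ((insert a S).erase b)) := by
    refine Finset.sum_congr rfl fun a ha => ?_
    have ha' := Finset.mem_compl.1 ha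
    rw [upSet, Finset.sum_insert ha', Finset.erase_insert ha']
  have h2 : upSet (downSet f) S
      = ∑ b ∈ S, (f S + ∑ a ∈ Sᶜ, f ((insert a S).erase b)) := by
    refine Finset.sum_congr rfl fun b hb => ?_
    rw [downSet, Finset.compl_erase, Finset.sum_insert (by simpa using hb),
      Finset.insert_erase hb]
    congr 1
    refine Finset.sum_congr rfl fun a ha => ?_
    have hab : a ≠ b := fun h => Finset.mem_compl.1 ha (h ▸ hb)
    rw [Finset.erase_insert_of_ne hab]
  have hc : ((Sᶜ.card : ℕ) : ℝ) = (n : ℝ) - S.card := by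
    rw [Finset.card_compl, Fintype.card_fin,
      Nat.cast_sub (by simpa using Finset.card_le_univ S)]
  rw [h1, h2, Finset.sum_add_distrib, Finset.sum_add_distrib,
    Finset.sum_comm (s := S) (t := Sᶜ)]
  simp only [Finset.sum_const, nsmul_eq_mul, hc]
  ring

lemma sum_upSet_mul {n : ℕ} (f g : Finset (Fin n) → ℝ) :
    ∑ S, upSet f S * g S = ∑ S, f S * downSet g S := by
  simp only [upSet, downSet, Finset.sum_mul, Finset.mul_sum]
  rw [Finset.sum_sigma', Finset.sum_sigma']
  refine Finset.sum_bij' (fun p _ => ⟨p.1.erase p.2, p.2⟩) (fun p _ => ⟨insert p.2 p.1, p.2⟩)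
    ?_ ?_ ?_ ?_ ?_
  · rintro ⟨S, a⟩ h
    simp
  · rintro ⟨S, a⟩ h
    simp
  · rintro ⟨S, a⟩ h
    simp only [Finset.mem_sigma, Finset.mem_univ, true_and] at h
    simp [Finset.insert_erase h]
  · rintro ⟨S, a⟩ h
    simp only [Finset.mem_sigma, Finset.mem_univ, true_and, Finset.mem_compl] at h
    simp [Finset.erase_insert h]
  · rintro ⟨S, a⟩ h
    simp only [Finset.mem_sigma, Finset.mem_univ, true_and] at h
    simp [Finset.insert_erase h]

/-! ### The ladder over a vector killed by the down operator -/

lemma upSet_iterate_support {n i : ℕ} (w : Finset (Fin n) → ℝ)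
    (hw : ∀ S, S.card ≠ i → w S = 0) (d : ℕ) :
    ∀ S, S.card ≠ i + d → (upSet^[d] w) S = 0 := by
  induction d with
  | zero => simpa using hw
  | succ d ih =>
    intro S hS
    rw [Function.iterate_succ_apply', upSet]
    refine Finset.sum_eq_zero fun a ha => ih _ ?_
    have := Finset.card_erase_add_one ha
    omega

/-- On the ladder `w, Uw, U²w, …` over a vector `w` of level `i` killed by `D`, the operator `D`
lowers by one step with the factor `∑_{j ≤ d} (n - 2(i + j)) = (d + 1)(n - 2i - d)`. -/
lemma downSet_iterate {n i : ℕ} (w : Finset (Fin n) → ℝ)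
    (hw : ∀ S, S.card ≠ i → w S = 0) (hD : downSet w = 0) (d : ℕ) :
    downSet (upSet^[d + 1] w)
      = fun S => ((d : ℝ) + 1) * ((n : ℝ) - 2 * i - d) * (upSet^[d] w) S := by
  have hdiag : ∀ (d : ℕ) (S : Finset (Fin n)),
      ((n : ℝ) - 2 * S.card) * (upSet^[d] w) S
        = ((n : ℝ) - 2 * (i + d)) * (upSet^[d] w) S := by
    intro d S
    by_cases h : S.card = i + d
    · rw [h]; push_cast; ring
    · simp [upSet_iterate_support w hw d S h]
  induction d with
  | zero =>
    funext S
    rw [Function.iterate_succ_apply', downSet_upSet, hdiag]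
    simp [hD, upSet]
  | succ d ih =>
    funext S
    rw [Function.iterate_succ_apply', downSet_upSet, hdiag, ih, upSet, ← Finset.mul_sum]
    rw [show ∑ a ∈ S, (upSet^[d] w) (S.erase a) = (upSet^[d + 1] w) S by
      rw [Function.iterate_succ_apply', upSet]]
    push_cast
    ring

lemma sum_sq_succ {n i : ℕ} (w : Finset (Fin n) → ℝ)
    (hw : ∀ S, S.card ≠ i → w S = 0) (hD : downSet w = 0) (d : ℕ) :
    ∑ S, (upSet^[d + 1] w) S ^ 2
      = ((d : ℝ) + 1) * ((n : ℝ) - 2 * i - d) * ∑ S, (upSet^[d] w) S ^ 2 := by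
  have h := sum_upSet_mul (upSet^[d] w) (upSet^[d + 1] w)
  rw [downSet_iterate w hw hD d, ← Function.iterate_succ_apply' upSet d w] at h
  simp only [pow_two]
  rw [h, Finset.mul_sum]
  exact Finset.sum_congr rfl fun S _ => by ring

lemma sum_sq_eq {n i : ℕ} (h2i : 2 * i ≤ n) (w : Finset (Fin n) → ℝ)
    (hw : ∀ S, S.card ≠ i → w S = 0) (hD : downSet w = 0) (d : ℕ) (hd : d ≤ n - 2 * i) :
    ∑ S, (upSet^[d] w) S ^ 2
      = ((n - 2 * i).factorial : ℝ) * (d.factorial : ℝ) / ((n - 2 * i - d).factorial : ℝ)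
        * ∑ S, w S ^ 2 := by
  induction d with
  | zero =>
    have : ((n - 2 * i).factorial : ℝ) ≠ 0 := by positivity
    simp [this]
  | succ d ih =>
    rw [sum_sq_succ w hw hD, ih (by omega)]
    obtain ⟨m, hm⟩ : ∃ m, n = 2 * i + d + 1 + m := ⟨n - (2 * i + d + 1), by omega⟩
    have e1 : n - 2 * i - d = m + 1 := by omega
    have e2 : n - 2 * i - (d + 1) = m := by omega
    have e3 : (n : ℝ) - 2 * i - d = m + 1 := by rw [hm]; push_cast; ring
    have : (m.factorial : ℝ) ≠ 0 := by positivity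
    have : (m : ℝ) + 1 ≠ 0 := by positivity
    rw [e1, e2, e3, Nat.factorial_succ m, Nat.factorial_succ d]
    push_cast
    field_simp

/-- The factor `n - 2i - d` vanishes at `d = n - 2i`, so the ladder stops there. -/
lemma upSet_iterate_eq_zero {n i : ℕ} (h2i : 2 * i ≤ n) (w : Finset (Fin n) → ℝ)
    (hw : ∀ S, S.card ≠ i → w S = 0) (hD : downSet w = 0) (d : ℕ) (hd : n - 2 * i < d) :
    upSet^[d] w = 0 := by
  induction d, hd using Nat.le_induction with
  | base =>
    have h := sum_sq_succ w hw hD (n - 2 * i)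
    rw [Nat.cast_sub h2i] at h
    push_cast at h
    rw [sub_self, mul_zero, zero_mul,
      Finset.sum_eq_zero_iff_of_nonneg fun S _ => sq_nonneg _] at h
    funext S
    simpa using h S (Finset.mem_univ S)
  | succ d _ ih =>
    rw [Function.iterate_succ_apply', ih]
    funext S
    simp [upSet]

/-! ### Transfer to the slice operators -/

lemma downSet_extend {n i : ℕ} (v : Slice n i → ℝ) (hv : (downOp n i).mulVec v = 0) :
    downSet (extend v) = 0 := by
  funext S
  by_cases h : S.card + 1 = i
  · subst h
    have h1 := downOp_mulVec v (ofSet S rfl)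
    rw [ones_ofSet] at h1
    rw [← h1]
    exact congrFun hv _
  · refine Finset.sum_eq_zero fun a ha => extend_eq_zero v ?_
    rw [Finset.card_insert_of_notMem (Finset.mem_compl.1 ha)]
    exact h

lemma upPathAux_mulVec {n i : ℕ} (v : Slice n i → ℝ) (d : ℕ) :
    extend ((upPathAux n i d).mulVec v) = upSet^[d] (extend v) := by
  induction d with
  | zero =>
    show extend ((1 : Matrix (Slice n i) (Slice n i) ℝ).mulVec v) = _
    simp
  | succ d ih =>
    funext S
    rw [Function.iterate_succ_apply', ← ih]
    by_cases h : S.card = i + d + 1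
    · have h1 := upOp_mulVec ((upPathAux n i d).mulVec v) (ofSet S h)
      rw [ones_ofSet, Matrix.mulVec_mulVec] at h1
      rw [← h1]
      exact dif_pos h
    · rw [extend_eq_zero _ h]
      refine (Finset.sum_eq_zero fun a ha => extend_eq_zero _ ?_).symm
      have := Finset.card_erase_add_one ha
      omega

lemma upPath_mulVec {n i k : ℕ} (h : i ≤ k) (v : Slice n i → ℝ) :
    extend ((upPath n i k).mulVec v) = upSet^[k - i] (extend v) := by
  have key : ∀ (d k : ℕ) (_ : i + d = k)
      (e : Matrix (Slice n (i + d)) (Slice n i) ℝ = Matrix (Slice n k) (Slice n i) ℝ),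
      extend ((cast e (upPathAux n i d)).mulVec v) = upSet^[d] (extend v) := by
    rintro d k rfl e
    exact upPathAux_mulVec v d
  rw [upPath, dif_pos h]
  exact key (k - i) k (by omega) _

lemma sum_sq_extend {n k : ℕ} (f : Slice n k → ℝ) :
    ∑ x, f x ^ 2 = ∑ S, extend f S ^ 2 := by
  rw [← sum_slice (k := k) (fun S => extend f S ^ 2)]
  · simp only [extend_ones]
  · intro S hS
    simp [extend_eq_zero f hS]

/-- For nonzero `v` with `P↓_{n,i} v = 0` and `i ≤ n/2`:
`‖P↑_{n,i,k} v‖₂²/‖v‖₂² = (n-2i)!(k-i)!/(n-k-i)!` for `i ≤ k ≤ n - i`, and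
`P↑_{n,i,k} v = 0` for `k > n - i`. -/
theorem stmt3 (n i : ℕ) (h2i : 2 * i ≤ n) (v : Slice n i → ℝ) (hv0 : v ≠ 0)
    (hv : (downOp n i).mulVec v = 0) :
    (∀ k, i ≤ k → k ≤ n - i →
        (∑ x, ((upPath n i k).mulVec v x) ^ 2) / (∑ x, (v x) ^ 2)
          = ((n - 2 * i).factorial : ℝ) * ((k - i).factorial : ℝ)
              / ((n - k - i).factorial : ℝ)) ∧
    (∀ k, n - i < k → (upPath n i k).mulVec v = 0) := by
  have hw : ∀ S : Finset (Fin n), S.card ≠ i → extend v S = 0 := fun S => extend_eq_zero v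
  have hD := downSet_extend v hv
  refine ⟨fun k hik hk => ?_, fun k hk => ?_⟩
  · have hpos : ∑ x, v x ^ 2 ≠ 0 := by
      intro h
      rw [Finset.sum_eq_zero_iff_of_nonneg fun x _ => sq_nonneg _] at h
      exact hv0 (funext fun x => by simpa using h x (Finset.mem_univ x))
    rw [div_eq_iff hpos, sum_sq_extend, upPath_mulVec hik, sum_sq_extend v,
      sum_sq_eq h2i _ hw hD (k - i) (by omega),
      show n - 2 * i - (k - i) = n - k - i by omega]
  · funext x
    rw [← extend_ones ((upPath n i k).mulVec v) x, upPath_mulVec (by omega),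
      upSet_iterate_eq_zero h2i _ hw hD (k - i) (by omega)]
    rfl
end

section
/- For every k ≤ n/2 and every S ∈ H_{n,k}, the vector χ_{n,S} lies in the nullspace of the down operator: P↓_{n,|S|} χ_{n,S} = 0. -/
/-!
The idea is to extend functions on slices by zero to the whole cube `{0,1}^n`, where the down and
up operators become `D f x = ∑_{x_i = 0} f (x + e_i)` and `U f x = ∑_{x_i = 1} f (x - e_i)`.
They satisfy the `sl₂` relation `D U f x - U D f x = (n - 2|x|) f x` (`cubeDown_cubeUp`).

Write `χ = χ_{n+1,S}` and proceed by induction on `n` (`cubeDown_chiExt`). If `n + 1 ∉ S`, then `χ`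
is `χ_{n,S}` on `x_{n+1} = 0` and zero on `x_{n+1} = 1`, so `D χ = 0` is inherited. If `n + 1 ∈ S`,
put `χ' = χ_{n,S∖{n+1}}` and `c = (n + 1) - 2|S| + 1`. On `x_{n+1} = 1` the vector `D χ` equals
`D χ' = 0`. On `x_{n+1} = 0` it equals `-D U χ' / c + χ'`, and since `D χ' = 0` and `χ'` is supported
on weight `|S| - 1`, where `n - 2|x| = c`, the two terms cancel.
The denominator `c` is nonzero because the largest of the `|S|` elements of `S` is at least `2|S|`.
-/

open scoped Classical

/-! ### The down and up operators on the whole cube -/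

/-- The down operator on functions on the whole cube. -/
noncomputable def cubeDown {n : ℕ} (f : (Fin n → Bool) → ℝ) (x : Fin n → Bool) : ℝ :=
  ∑ i, if x i = true then 0 else f (Function.update x i true)

/-- The up operator on functions on the whole cube. -/
noncomputable def cubeUp {n : ℕ} (f : (Fin n → Bool) → ℝ) (x : Fin n → Bool) : ℝ :=
  ∑ i, if x i = true then f (Function.update x i false) else 0

/-- `χ_{n,S}` extended by zero from its slice to the whole cube. -/
noncomputable def chiExt (n : ℕ) (S : Finset ℕ) (x : Fin n → Bool) : ℝ :=
  if h : (Finset.univ.filter fun i => x i = true).card = S.card then chi n S ⟨x, h⟩ else 0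

/-- The `sl₂` commutation relation between the down and up operators. -/
lemma cubeDown_cubeUp {n : ℕ} (f : (Fin n → Bool) → ℝ) (x : Fin n → Bool) :
    cubeDown (cubeUp f) x = cubeUp (cubeDown f) x + ((n : ℝ) - 2 * wt x) * f x := by
  -- The diagonal contribution `i = j` to `D U f x - U D f x`.
  have hdiag : ((n : ℝ) - 2 * wt x) * f x = ∑ i, (if x i = true then - f x else f x) := by
    have h1 : ∑ i, (if x i = true then - f x else f x)
        = ∑ i : Fin n, (f x - 2 * f x * (if x i = true then 1 else 0)) := by
      refine Finset.sum_congr rfl fun i _ => ?_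
      split_ifs <;> ring
    rw [h1, Finset.sum_sub_distrib, ← Finset.mul_sum, Finset.sum_boole, wt]
    simp
    ring
  have hD : cubeDown (cubeUp f) x = ∑ i, ∑ j, (if x i = true then 0 else
      if i = j then f x else if x j = true then
        f (Function.update (Function.update x i true) j false) else 0) := by
    unfold cubeDown cubeUp
    refine Finset.sum_congr rfl fun i _ => ?_
    by_cases hi : x i = true
    · simp [hi]
    · simp only [hi]
      refine Finset.sum_congr rfl fun j _ => ?_
      by_cases hij : i = j
      · subst hij
        have : Function.update x i false = x := by
          rw [Function.update_eq_self_iff]; simpa using hi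
        simp [this]
      · simp [hij, Function.update_of_ne (Ne.symm hij)]
  have hU : cubeUp (cubeDown f) x = ∑ j, ∑ i, (if x j = true then
      (if i = j then f x else if x i = true then 0 else
        f (Function.update (Function.update x i true) j false)) else 0) := by
    unfold cubeDown cubeUp
    refine Finset.sum_congr rfl fun j _ => ?_
    by_cases hj : x j = true
    · simp only [hj, if_true]
      refine Finset.sum_congr rfl fun i _ => ?_
      by_cases hij : i = j
      · subst hij
        have : Function.update x i true = x := by
          rw [Function.update_eq_self_iff]; exact hj.symm
        simp [this]
      · simp [hij, Function.update_comm hij]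
    · simp [hj]
  rw [hD, hU, Finset.sum_comm, hdiag, ← Finset.sum_add_distrib]
  refine Finset.sum_congr rfl fun j _ => ?_
  have h2 : (if x j = true then - f x else f x)
      = ∑ i, (if i = j then (if x j = true then - f x else f x) else 0) := by simp
  rw [h2, ← Finset.sum_add_distrib]
  refine Finset.sum_congr rfl fun i _ => ?_
  by_cases hij : i = j
  · subst hij; by_cases hi : x i = true <;> simp [hi]
  · by_cases hi : x i = true <;> by_cases hj : x j = true <;> simp [hij, hi, hj]

/-! ### Comparison with the operators on slices -/

lemma wt_update_true {n : ℕ} (x : Fin n → Bool) (i : Fin n) (h : ¬ x i = true) :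
    wt (Function.update x i true) = wt x + 1 := by
  have : (Finset.univ.filter fun j => Function.update x i true j = true)
      = insert i (Finset.univ.filter fun j => x j = true) := by
    ext j
    by_cases hj : j = i
    · subst hj; simp
    · simp [hj]
  rw [wt, this, Finset.card_insert_of_notMem (by simpa using h), wt]

lemma wt_update_false {n : ℕ} (x : Fin n → Bool) (i : Fin n) (h : x i = true) :
    wt (Function.update x i false) + 1 = wt x := by
  rw [← wt_update_true (Function.update x i false) i (by simp), Function.update_idem, ← h,
    Function.update_eq_self]

/-- The covering relation of the cube: a vector below `x` of weight one less is `x - e_i`. -/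
lemma exists_update_of_le {n : ℕ} {x y : Fin n → Bool} (hle : ∀ i, y i = true → x i = true)
    (hw : wt y + 1 = wt x) : ∃ i, x i = true ∧ y = Function.update x i false := by
  have hsub : (Finset.univ.filter fun i => y i = true) ⊆ (Finset.univ.filter fun i => x i = true) :=
    fun i => by simpa using hle i
  have hc := Finset.card_sdiff_add_card_eq_card hsub
  unfold wt at hw
  obtain ⟨i, hi⟩ := Finset.card_eq_one.1 (show ((Finset.univ.filter fun i => x i = true) \
    (Finset.univ.filter fun i => y i = true)).card = 1 by omega)
  have hmem : ∀ j, (x j = true ∧ ¬ y j = true) ↔ j = i := fun j => by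
    have := Finset.ext_iff.1 hi j
    simpa using this
  refine ⟨i, ((hmem i).2 rfl).1, funext fun j => ?_⟩
  by_cases hj : j = i
  · subst hj
    simpa using ((hmem j).2 rfl).2
  · rw [Function.update_of_ne hj]
    have h1 := hmem j
    have h2 := hle j
    cases hx : x j <;> cases hy : y j <;> simp_all

/-- The up operator of slices, evaluated at `x`, agrees with `cubeUp`. -/
lemma sum_slice_le {n k : ℕ} (g : (Fin n → Bool) → ℝ) (x : Fin n → Bool) (hx : wt x = k + 1) :
    ∑ y : Slice n k, (if ∀ i, y.1 i = true → x i = true then (1 : ℝ) else 0) * g y.1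
      = cubeUp g x := by
  unfold cubeUp
  simp only [ite_mul, one_mul, zero_mul]
  rw [← Finset.sum_filter, ← Finset.sum_filter]
  symm
  refine Finset.sum_bij (fun i hi => ⟨Function.update x i false, ?_⟩) ?_ ?_ ?_ ?_
  · have := wt_update_false x i (by simpa using hi)
    unfold wt at this hx
    omega
  · intro i hi
    simp only [Finset.mem_filter, Finset.mem_univ, true_and]
    intro j hj
    by_cases h : j = i
    · subst h; simpa using hi
    · simpa [h] using hj
  · intro i hi j hj h
    by_contra hij
    have h1 := congrFun (congrArg Subtype.val h) i
    simp only [Finset.mem_filter, Finset.mem_univ, true_and] at hi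
    simp [Function.update_of_ne hij, hi] at h1
  · intro y hy
    simp only [Finset.mem_filter, Finset.mem_univ, true_and] at hy
    obtain ⟨i, hi, h⟩ := exists_update_of_le hy (by rw [hx, wt, y.2])
    exact ⟨i, by simpa using hi, Subtype.ext h.symm⟩
  · intro i hi
    rfl

/-- The down operator of slices, evaluated at `x`, agrees with `cubeDown`. -/
lemma sum_slice_ge {n k : ℕ} (g : (Fin n → Bool) → ℝ) (x : Fin n → Bool) (hx : wt x + 1 = k) :
    ∑ y : Slice n k, (if ∀ i, x i = true → y.1 i = true then (1 : ℝ) else 0) * g y.1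
      = cubeDown g x := by
  have hc : cubeDown g x = ∑ i, if ¬ x i = true then g (Function.update x i true) else 0 := by
    unfold cubeDown
    refine Finset.sum_congr rfl fun i _ => ?_
    split_ifs <;> rfl
  rw [hc]
  simp only [ite_mul, one_mul, zero_mul]
  rw [← Finset.sum_filter, ← Finset.sum_filter]
  symm
  refine Finset.sum_bij (fun i hi => ⟨Function.update x i true, ?_⟩) ?_ ?_ ?_ ?_
  · have := wt_update_true x i (by simpa using hi)
    unfold wt at this hx
    omega
  · intro i hi
    simp only [Finset.mem_filter, Finset.mem_univ, true_and]
    intro j hj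
    by_cases h : j = i
    · subst h; simp
    · simpa [h] using hj
  · intro i hi j hj h
    by_contra hij
    have h1 := congrFun (congrArg Subtype.val h) i
    simp only [Finset.mem_filter, Finset.mem_univ, true_and] at hi
    simp [Function.update_of_ne hij, hi] at h1
  · intro y hy
    simp only [Finset.mem_filter, Finset.mem_univ, true_and] at hy
    obtain ⟨i, hi, h⟩ := exists_update_of_le hy (by rw [hx, wt, y.2])
    refine ⟨i, by simp [h], Subtype.ext ?_⟩
    simp only [h, Function.update_idem]
    exact Function.update_eq_self_iff.2 hi.symm
  · intro i hi
    rfl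

/-! ### The recursion for the extended vectors -/

lemma chiExt_of_ne {n : ℕ} {S : Finset ℕ} {x : Fin n → Bool} (h : wt x ≠ S.card) :
    chiExt n S x = 0 := dif_neg h

lemma chi_eq_chiExt {n : ℕ} {S : Finset ℕ} (y : Slice n S.card) : chi n S y = chiExt n S y.1 := by
  rw [chiExt, dif_pos y.2]

lemma cubeUp_chiExt_of_ne {n : ℕ} {S : Finset ℕ} {x : Fin n → Bool} (h : wt x ≠ S.card + 1) :
    cubeUp (chiExt n S) x = 0 := by
  refine Finset.sum_eq_zero fun i _ => ?_
  split_ifs with hi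
  · have := wt_update_false x i hi
    exact chiExt_of_ne (by omega)
  · rfl

lemma wt_snoc_true {n : ℕ} (x : Fin n → Bool) :
    wt (Fin.snoc x true : Fin (n + 1) → Bool) = wt x + 1 := by
  have := wcast_true (Fin.snoc x true : Fin (n + 1) → Bool) (by simp)
  simp only [Fin.snoc_castSucc] at this
  exact this.symm

lemma wt_snoc_false {n : ℕ} (x : Fin n → Bool) :
    wt (Fin.snoc x false : Fin (n + 1) → Bool) = wt x := by
  have := wcast_false (Fin.snoc x false : Fin (n + 1) → Bool) (by simp)
  simp only [Fin.snoc_castSucc] at this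
  exact this.symm

lemma chiExt_snoc_true {n : ℕ} {S : Finset ℕ} (x : Fin n → Bool) :
    chiExt (n + 1) S (Fin.snoc x true) =
      if n + 1 ∈ S then chiExt n (S.erase (n + 1)) x else 0 := by
  by_cases hw : wt x + 1 = S.card
  · have hx : wt (Fin.snoc x true : Fin (n + 1) → Bool) = S.card := (wt_snoc_true x).trans hw
    rw [wt] at hx
    rw [chiExt, dif_pos hx, chi]
    split_ifs with hS
    · beta_reduce
      rw [dif_pos (by simp), chi_eq_chiExt]
      congr 1
      funext i
      simp [dropLastT]
    · beta_reduce
      rw [dif_pos (by simp)]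
  · rw [chiExt_of_ne (by rw [wt_snoc_true]; exact hw)]
    split_ifs with hS
    · rw [chiExt_of_ne]
      have := Finset.card_erase_add_one hS
      omega
    · rfl

lemma chiExt_snoc_false {n : ℕ} {S : Finset ℕ} (x : Fin n → Bool) :
    chiExt (n + 1) S (Fin.snoc x false) =
      if n + 1 ∈ S then
        -cubeUp (chiExt n (S.erase (n + 1))) x / ((n : ℝ) + 1 - 2 * S.card + 1)
      else chiExt n S x := by
  by_cases hw : wt x = S.card
  · have hx : wt (Fin.snoc x false : Fin (n + 1) → Bool) = S.card := (wt_snoc_false x).trans hw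
    rw [wt] at hx
    rw [chiExt, dif_pos hx, chi]
    split_ifs with hS
    · beta_reduce
      rw [dif_neg (by simp), ← sum_slice_le (k := (S.erase (n + 1)).card)]
      · simp [chi_eq_chiExt, dropLast]
      · rw [hw, Finset.card_erase_add_one hS]
    · beta_reduce
      rw [dif_neg (by simp), chi_eq_chiExt]
      congr 1
      funext i
      simp [dropLast]
  · rw [chiExt_of_ne (by rw [wt_snoc_false]; exact hw)]
    split_ifs with hS
    · rw [cubeUp_chiExt_of_ne (by rw [Finset.card_erase_add_one hS]; exact hw)]
      simp
    · rw [chiExt_of_ne hw]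

lemma cubeDown_snoc_true {n : ℕ} (f : (Fin (n + 1) → Bool) → ℝ) (x : Fin n → Bool) :
    cubeDown f (Fin.snoc x true) = cubeDown (fun y => f (Fin.snoc y true)) x := by
  simp [cubeDown, Fin.sum_univ_castSucc, Fin.snoc_update]

lemma cubeDown_snoc_false {n : ℕ} (f : (Fin (n + 1) → Bool) → ℝ) (x : Fin n → Bool) :
    cubeDown f (Fin.snoc x false)
      = cubeDown (fun y => f (Fin.snoc y false)) x + f (Fin.snoc x true) := by
  simp [cubeDown, Fin.sum_univ_castSucc, Fin.snoc_update, Fin.update_snoc_last]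

lemma cubeDown_neg_div {n : ℕ} (f : (Fin n → Bool) → ℝ) (c : ℝ) (x : Fin n → Bool) :
    cubeDown (fun y => -f y / c) x = -cubeDown f x / c := by
  unfold cubeDown
  rw [← Finset.sum_neg_distrib, Finset.sum_div]
  refine Finset.sum_congr rfl fun i _ => ?_
  split_ifs <;> simp

/-! ### The induction -/

/-- The statement for functions on the whole cube, by induction on `n`.
The hypothesis says that each `s ∈ S` of rank `j` in `S`
satisfies `s ≥ 2j`, in a form that passes to subsets of `S`. -/
lemma cubeDown_chiExt (n : ℕ) : ∀ (S : Finset ℕ), S ⊆ Finset.Icc 1 n →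
    (∀ s ∈ S, 2 * (S.filter (· ≤ s)).card ≤ s) → ∀ x, cubeDown (chiExt n S) x = 0 := by
  induction n with
  | zero => intro S _ _ x; simp [cubeDown]
  | succ n ih =>
    intro S hsub hS x
    obtain ⟨y, b, rfl⟩ : ∃ (y : Fin n → Bool) (b : Bool), x = Fin.snoc y b :=
      ⟨Fin.init x, x (Fin.last n), (Fin.snoc_init_self x).symm⟩
    by_cases hmem : n + 1 ∈ S
    · have ih' : ∀ x, cubeDown (chiExt n (S.erase (n + 1))) x = 0 := by
        refine ih _ (fun s hs => ?_) (fun s hs => ?_)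
        · rw [Finset.mem_erase] at hs
          have := Finset.mem_Icc.1 (hsub hs.2)
          rw [Finset.mem_Icc]
          omega
        · refine le_trans ?_ (hS s (Finset.mem_of_mem_erase hs))
          have := Finset.card_le_card
            (Finset.filter_subset_filter (· ≤ s) (Finset.erase_subset (n + 1) S))
          omega
      cases b with
      | true =>
        rw [cubeDown_snoc_true]
        simp only [chiExt_snoc_true, hmem, if_true]
        exact ih' y
      | false =>
        rw [cubeDown_snoc_false]
        simp only [chiExt_snoc_true, chiExt_snoc_false, hmem, if_true]
        have hcard := Finset.card_erase_add_one hmem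
        have hle : 2 * S.card ≤ n + 1 := by
          have := hS _ hmem
          rwa [Finset.filter_true_of_mem
            (fun s hs => (Finset.mem_Icc.1 (hsub hs)).2)] at this
        have hc : (n : ℝ) + 1 - 2 * S.card + 1 ≠ 0 := by
          have : (2 : ℝ) * S.card ≤ n + 1 := by exact_mod_cast hle
          linarith
        have hUD : cubeUp (cubeDown (chiExt n (S.erase (n + 1)))) y = 0 := by
          simp [cubeUp, ih']
        rw [cubeDown_neg_div, cubeDown_cubeUp, hUD]
        by_cases hw : wt y = (S.erase (n + 1)).card
        · have hw' : (wt y : ℝ) + 1 = S.card := by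
            rw [hw]; exact_mod_cast hcard
          have : (n : ℝ) - 2 * wt y = (n : ℝ) + 1 - 2 * S.card + 1 := by linarith
          rw [this]
          field_simp
          ring
        · rw [chiExt_of_ne hw]; simp
    · have ih' : ∀ x, cubeDown (chiExt n S) x = 0 := by
        refine ih _ (fun s hs => ?_) hS
        have := Finset.mem_Icc.1 (hsub hs)
        have : s ≠ n + 1 := fun h => hmem (h ▸ hs)
        rw [Finset.mem_Icc]
        omega
      cases b with
      | true =>
        rw [cubeDown_snoc_true]
        simp only [chiExt_snoc_true, hmem, if_false]
        simp [cubeDown]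
      | false =>
        rw [cubeDown_snoc_false]
        simp only [chiExt_snoc_true, chiExt_snoc_false, hmem, if_false, add_zero]
        exact ih' y

/-- If `s` is the `j`-th smallest element of `S`, then exactly `j` elements of `S` are at most `s`,
so the condition `s_j ≥ 2j` becomes a bound on a cardinality. -/
lemma IsH.two_mul_card_le {n k : ℕ} {S : Finset ℕ} (hS : IsH n k S) :
    ∀ s ∈ S, 2 * (S.filter (· ≤ s)).card ≤ s := by
  intro s hs
  obtain ⟨j, hj⟩ : ∃ j, S.orderEmbOfFin rfl j = s := by
    have := Finset.range_orderEmbOfFin S rfl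
    rw [← Finset.mem_coe, ← this] at hs
    exact hs
  have h1 : s = (S.sort (· ≤ ·)).getD j 0 := by
    rw [← hj, Finset.orderEmbOfFin_apply, List.getD_eq_getElem]
    rfl
  have h2 := hS.2.2 j j.2
  rw [← h1] at h2
  have h3 : S.filter (· ≤ s) ⊆ (Finset.Iic j).image (S.orderEmbOfFin rfl) := by
    intro t ht
    rw [Finset.mem_filter] at ht
    have hm := ht.1
    rw [← Finset.mem_coe, ← Finset.range_orderEmbOfFin S rfl] at hm
    obtain ⟨i, rfl⟩ := hm
    refine Finset.mem_image_of_mem _ (Finset.mem_Iic.2 ?_)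
    have := ht.2
    rw [← hj] at this
    exact (S.orderEmbOfFin rfl).le_iff_le.1 this
  have h4 := (Finset.card_le_card h3).trans Finset.card_image_le
  rw [Fin.card_Iic] at h4
  omega

/-- For `k ≤ n/2` and `S ∈ H_{n,k}`, `P↓_{n,|S|} χ_{n,S} = 0`. -/
theorem stmt5 (n k : ℕ) (hk : 2 * k ≤ n) (S : Finset ℕ) (hS : IsH n k S) :
    (downOp n S.card).mulVec (chi n S) = 0 := by
  funext x
  rcases Nat.eq_zero_or_pos S.card with h0 | hpos
  · simp [Matrix.mulVec, dotProduct, downOp, h0]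
  · have hx : wt x.1 + 1 = S.card := by
      have := x.2
      unfold wt
      omega
    have := sum_slice_ge (chiExt n S) x.1 hx
    rw [cubeDown_chiExt n S hS.1 hS.two_mul_card_le] at this
    simpa [Matrix.mulVec, dotProduct, downOp, hpos, chi_eq_chiExt] using this
end

section
/- For every k ≤ n/2 and all S₁, S₂ ∈ H_{n,k} with |S₁| = |S₂| and S₁ ≠ S₂, the vectors χ_{n,S₁} and χ_{n,S₂} are orthogonal: ⟨χ_{n,S₁}, χ_{n,S₂}⟩ = 0. -/
/-!
Extend every vector on a slice by zero to the whole cube `Fin n → Bool`. On functions on the cube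
the up operator `U` and the down operator `D` are adjoint, and `D U - U D` is multiplication by
`n - 2 |x|`. Splitting off the last coordinate, `χ_{n+1,S}` has halves `(χ_{n,S}, 0)` if
`n + 1 ∉ S`, and `(-U χ_{n,T} / c, χ_{n,T})` with `T = S \ {n+1}`, `c = n - 2 |T|` otherwise.

By induction on `n`, `D χ_{n,S} = 0`: in the second case, the first half of `D χ_{n+1,S}` is
`-D U χ_{n,T} / c + χ_{n,T}`, and `D U χ_{n,T} = c χ_{n,T}` because `D χ_{n,T} = 0`. The condition
`s_j ≥ 2j` ensures `c > 0`.

Orthogonality then also follows by induction. If `n + 1` lies in neither set, the inner product is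
that of the restrictions; if it lies in both, the inner product is
`⟨χ_{T₁}, χ_{T₂}⟩ + ⟨χ_{T₁}, D U χ_{T₂}⟩ / c²`, a multiple of `⟨χ_{T₁}, χ_{T₂}⟩ = 0`; if it lies
only in `S₁`, it is a multiple of `⟨U χ_{T₁}, χ_{S₂}⟩ = ⟨χ_{T₁}, D χ_{S₂}⟩ = 0`.
-/

open scoped Classical

namespace SliceOrth

/-- Appending a last coordinate to a point of the cube. -/
def app {n : ℕ} (x : Fin n → Bool) (b : Bool) : Fin (n + 1) → Bool :=
  Fin.snoc (α := fun _ => Bool) x b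

/-- The up operator on functions on the whole cube. -/
def U {n : ℕ} (f : (Fin n → Bool) → ℝ) (x : Fin n → Bool) : ℝ :=
  ∑ i, if x i = true then f (Function.update x i false) else 0

/-- The down operator on functions on the whole cube. -/
def D {n : ℕ} (f : (Fin n → Bool) → ℝ) (x : Fin n → Bool) : ℝ :=
  ∑ i, if x i = true then 0 else f (Function.update x i true)

/-- `χ_{n,S}` extended by zero to the whole cube. -/
noncomputable def X (n : ℕ) (S : Finset ℕ) (x : Fin n → Bool) : ℝ :=
  if h : (Finset.univ.filter fun i => x i = true).card = S.card then chi n S ⟨x, h⟩ else 0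

/-- The condition `s_j ≥ 2j` for all `j`, as a ballot condition on initial segments. -/
def Ballot (S : Finset ℕ) : Prop := ∀ m, 2 * (S.filter (· ≤ m)).card ≤ m

/-! ### Up and down operators on the cube -/

section cube

variable {n : ℕ}

@[simp] lemma app_castSucc (x : Fin n → Bool) (b : Bool) (i : Fin n) :
    app x b i.castSucc = x i := by simp [app]

@[simp] lemma app_last (x : Fin n → Bool) (b : Bool) : app x b (Fin.last n) = b := by
  simp [app]

@[simp] lemma update_app_castSucc (x : Fin n → Bool) (b c : Bool) (i : Fin n) :
    Function.update (app x b) i.castSucc c = app (Function.update x i c) b := by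
  simp [app]

@[simp] lemma update_app_last (x : Fin n → Bool) (b c : Bool) :
    Function.update (app x b) (Fin.last n) c = app x c :=
  Fin.update_snoc_last (α := fun _ => Bool) _ _ _

lemma exists_app (x : Fin (n + 1) → Bool) : ∃ y b, x = app y b :=
  ⟨Fin.init (α := fun _ => Bool) x, x (Fin.last n), by simp [app]⟩

lemma sum_app (F : (Fin (n + 1) → Bool) → ℝ) :
    ∑ x, F x = ∑ x : Fin n → Bool, F (app x false) + ∑ x : Fin n → Bool, F (app x true) := by
  rw [← (Fin.snocEquiv (fun _ : Fin (n + 1) => Bool)).sum_comp, Fintype.sum_prod_type,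
    Fintype.sum_bool, add_comm]
  rfl

lemma U_app_true (f : (Fin (n + 1) → Bool) → ℝ) (x : Fin n → Bool) :
    U f (app x true) = U (fun y => f (app y true)) x + f (app x false) := by
  simp [U, Fin.sum_univ_castSucc]

lemma U_app_false (f : (Fin (n + 1) → Bool) → ℝ) (x : Fin n → Bool) :
    U f (app x false) = U (fun y => f (app y false)) x := by
  simp [U, Fin.sum_univ_castSucc]

lemma D_app_true (f : (Fin (n + 1) → Bool) → ℝ) (x : Fin n → Bool) :
    D f (app x true) = D (fun y => f (app y true)) x := by
  simp [D, Fin.sum_univ_castSucc]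

lemma D_app_false (f : (Fin (n + 1) → Bool) → ℝ) (x : Fin n → Bool) :
    D f (app x false) = D (fun y => f (app y false)) x + f (app x true) := by
  simp [D, Fin.sum_univ_castSucc]

lemma U_add (f g : (Fin n → Bool) → ℝ) (x : Fin n → Bool) :
    U (fun y => f y + g y) x = U f x + U g x := by
  simp only [U, ← Finset.sum_add_distrib]
  refine Finset.sum_congr rfl fun i _ => ?_
  split_ifs <;> simp

lemma D_add (f g : (Fin n → Bool) → ℝ) (x : Fin n → Bool) :
    D (fun y => f y + g y) x = D f x + D g x := by
  simp only [D, ← Finset.sum_add_distrib]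
  refine Finset.sum_congr rfl fun i _ => ?_
  split_ifs <;> simp

lemma D_mul (c : ℝ) (f : (Fin n → Bool) → ℝ) (x : Fin n → Bool) :
    D (fun y => c * f y) x = c * D f x := by
  simp only [D, Finset.mul_sum]
  refine Finset.sum_congr rfl fun i _ => ?_
  split_ifs <;> simp

lemma D_zero (x : Fin n → Bool) : D (fun _ => 0) x = 0 := by simp [D]

lemma U_zero (x : Fin n → Bool) : U (fun _ => 0) x = 0 := by simp [U]

lemma wt_app_true (x : Fin n → Bool) : wt (app x true) = wt x + 1 := by
  simpa [wt] using (wcast_true (app x true) (by simp)).symm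

lemma wt_app_false (x : Fin n → Bool) : wt (app x false) = wt x := by
  simpa [wt] using (wcast_false (app x false) (by simp)).symm

lemma wt_update (x : Fin n → Bool) (i : Fin n) (h : x i = true) :
    wt (Function.update x i false) + 1 = wt x := by
  have : (Finset.univ.filter fun j => Function.update x i false j = true)
      = (Finset.univ.filter fun j => x j = true).erase i := by
    ext j
    by_cases hj : j = i
    · subst hj; simp
    · simp [hj]
  unfold wt
  rw [this]
  exact Finset.card_erase_add_one (by simp [h])

/-- The commutation relation `D U - U D = n - 2 |x|`. -/
lemma comm : ∀ {n : ℕ} (f : (Fin n → Bool) → ℝ) (x : Fin n → Bool),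
    D (U f) x = U (D f) x + ((n : ℝ) - 2 * wt x) * f x := by
  intro n
  induction n with
  | zero => intro f x; simp [U, D, wt]
  | succ n ih =>
    intro f x
    obtain ⟨x, b, rfl⟩ := exists_app x
    cases b
    · simp only [D_app_false, U_app_false, U_app_true, U_add, ih, wt_app_false]
      push_cast; ring
    · simp only [D_app_false, D_app_true, U_app_true, D_add, ih, wt_app_true]
      push_cast; ring

/-- `U` and `D` are adjoint to each other. -/
lemma adj : ∀ {n : ℕ} (f g : (Fin n → Bool) → ℝ),
    ∑ x, U f x * g x = ∑ x, f x * D g x := by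
  intro n
  induction n with
  | zero => intro f g; simp [U, D]
  | succ n ih =>
    intro f g
    simp only [sum_app, U_app_false, U_app_true, D_app_false, D_app_true, add_mul, mul_add,
      Finset.sum_add_distrib, ih]
    ring

end cube

/-! ### The recursion for `χ` in terms of `U` -/

section recursion

variable {n : ℕ}

lemma X_of_wt_ne {S : Finset ℕ} {x : Fin n → Bool} (h : wt x ≠ S.card) : X n S x = 0 :=
  dif_neg h

lemma X_of_wt_eq {S : Finset ℕ} {x : Fin n → Bool} (h : wt x = S.card) :
    X n S x = chi n S ⟨x, h⟩ :=
  dif_pos h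

/-- On points of weight `|T| + 1`, the sum over the points of the slice below `x` is `U`. -/
lemma U_X (T : Finset ℕ) (x : Fin n → Bool) (hx : wt x = T.card + 1) :
    ∑ y : Slice n T.card, (if ∀ i, y.1 i = true → x i = true then (1 : ℝ) else 0) * chi n T y
      = U (X n T) x := by
  simp only [ite_mul, one_mul, zero_mul, U]
  rw [← Finset.sum_filter, ← Finset.sum_filter]
  symm
  have hw : ∀ i, x i = true → wt (Function.update x i false) = T.card := fun i hi => by
    have := wt_update x i hi
    omega
  refine Finset.sum_bij (fun i hi => ⟨Function.update x i false, hw i (by simpa using hi)⟩)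
    ?_ ?_ ?_ ?_
  · intro i hi
    simp only [Finset.mem_filter, Finset.mem_univ, true_and]
    intro j hj
    by_cases h : j = i
    · subst h; simp at hj
    · simpa [h] using hj
  · intro i hi j hj h
    simp only [Finset.mem_filter, Finset.mem_univ, true_and] at hi hj
    by_contra hij
    have := congrFun (congrArg Subtype.val h) i
    simp [hij, hi] at this
  · rintro ⟨y, hy⟩ hyx
    simp only [Finset.mem_filter, Finset.mem_univ, true_and] at hyx
    have hlt : (Finset.univ.filter fun i => y i = true).card
        < (Finset.univ.filter fun i => x i = true).card := by
      change _ < wt x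
      omega
    obtain ⟨i, hi, hi'⟩ := Finset.exists_mem_notMem_of_card_lt_card hlt
    simp only [Finset.mem_filter, Finset.mem_univ, true_and] at hi hi'
    refine ⟨i, by simpa using hi, Subtype.ext ?_⟩
    -- The supports are nested and have the same cardinality, hence are equal.
    have hs : (Finset.univ.filter fun j => y j = true)
        = Finset.univ.filter fun j => Function.update x i false j = true := by
      refine Finset.eq_of_subset_of_card_le ?_ ?_
      · intro j hj
        simp only [Finset.mem_filter, Finset.mem_univ, true_and] at hj ⊢
        have : j ≠ i := by rintro rfl; exact hi' hj
        simpa [this] using hyx j hj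
      · rw [hy]; exact (hw i hi).le
    funext j
    have := Finset.ext_iff.1 hs j
    simp only [Finset.mem_filter, Finset.mem_univ, true_and] at this
    exact (Bool.eq_iff_iff.2 this).symm
  · intro i hi
    have hi : x i = true := by simpa using hi
    exact dif_pos (hw i hi)

lemma X_notMem_true {S : Finset ℕ} (hS : n + 1 ∉ S) (x : Fin n → Bool) :
    X (n + 1) S (app x true) = 0 := by
  unfold X
  split_ifs with h
  · simp [chi, hS]
  · rfl

lemma X_notMem_false {S : Finset ℕ} (hS : n + 1 ∉ S) (x : Fin n → Bool) :
    X (n + 1) S (app x false) = X n S x := by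
  by_cases h : wt x = S.card
  · have h' : wt (app x false) = S.card := by rw [wt_app_false, h]
    rw [X_of_wt_eq h', X_of_wt_eq h]
    simp [chi, hS, dropLast]
  · rw [X_of_wt_ne h, X_of_wt_ne (by rwa [wt_app_false])]

lemma X_mem_true {S : Finset ℕ} (hS : n + 1 ∈ S) (x : Fin n → Bool) :
    X (n + 1) S (app x true) = X n (S.erase (n + 1)) x := by
  have hc := Finset.card_erase_add_one hS
  by_cases h : wt x = (S.erase (n + 1)).card
  · have h' : wt (app x true) = S.card := by rw [wt_app_true, h, hc]
    rw [X_of_wt_eq h', X_of_wt_eq h]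
    simp [chi, hS, dropLastT]
  · rw [X_of_wt_ne h, X_of_wt_ne (by rw [wt_app_true]; omega)]

lemma X_mem_false {S : Finset ℕ} (hS : n + 1 ∈ S) (x : Fin n → Bool) :
    X (n + 1) S (app x false)
      = -((n : ℝ) - 2 * (S.erase (n + 1)).card)⁻¹ * U (X n (S.erase (n + 1))) x := by
  have hc := Finset.card_erase_add_one hS
  by_cases h : wt x = S.card
  · have h' : wt (app x false) = S.card := by rw [wt_app_false, h]
    have hd : (n : ℝ) + 1 - 2 * S.card + 1 = n - 2 * (S.erase (n + 1)).card := by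
      rw [← hc]; push_cast; ring
    rw [← U_X _ x (by omega), ← hd, X_of_wt_eq h']
    simp only [chi, hS, dropLast, dite_true, app_last, app_castSucc, Bool.false_eq_true,
      dite_false]
    rw [neg_div, div_eq_inv_mul, neg_mul]
  · have hU : U (X n (S.erase (n + 1))) x = 0 := by
      refine Finset.sum_eq_zero fun i _ => ?_
      split_ifs with hi
      · have := wt_update x i hi
        exact X_of_wt_ne (by omega)
      · rfl
    rw [X_of_wt_ne (by rwa [wt_app_false]), hU, mul_zero]

end recursion

/-! ### The ballot condition -/

lemma Ballot.erase {S : Finset ℕ} (h : Ballot S) (a : ℕ) : Ballot (S.erase a) := fun m =>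
  le_trans (Nat.mul_le_mul_left 2 (Finset.card_le_card
    (Finset.filter_subset_filter _ (Finset.erase_subset a S)))) (h m)

lemma ballot_of_isH {n k : ℕ} {S : Finset ℕ} (h : IsH n k S) : Ballot S := by
  intro m
  obtain ⟨-, -, h⟩ := h
  by_contra! hlt
  have hle : (S.filter (· ≤ m)).card ≤ S.card := Finset.card_filter_le _ _
  have hl : (S.sort (· ≤ ·)).length = S.card := Finset.length_sort _
  set c := (S.filter (· ≤ m)).card with hc
  have hj := h (c - 1) (by omega)
  rw [List.getD_eq_getElem _ _ (by omega)] at hj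
  -- The element of index `c - 1` exceeds `m`, so at most `c - 1` elements of `S` are `≤ m`.
  have hsub : S.filter (· ≤ m) ⊆ ((S.sort (· ≤ ·)).take (c - 1)).toFinset := by
    intro s hs
    rw [Finset.mem_filter] at hs
    obtain ⟨i, hi, rfl⟩ := List.mem_iff_getElem.1 ((Finset.mem_sort (· ≤ ·)).2 hs.1)
    rw [List.mem_toFinset, List.mem_take_iff_getElem]
    refine ⟨i, ?_, rfl⟩
    by_contra! hci
    have hci : c - 1 ≤ i := by omega
    have := (Finset.sortedLT_sort S).sortedLE.getElem_le_getElem_of_le (hi := by omega) (hj := hi) hci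
    omega
  have h1 := Finset.card_le_card hsub
  have h2 := List.toFinset_card_le ((S.sort (· ≤ ·)).take (c - 1))
  rw [List.length_take] at h2
  omega

lemma subset_of_notMem {n : ℕ} {S : Finset ℕ} (h : S ⊆ Finset.Icc 1 (n + 1)) (hn : n + 1 ∉ S) :
    S ⊆ Finset.Icc 1 n := by
  intro s hs
  have := Finset.mem_Icc.1 (h hs)
  have hne : s ≠ n + 1 := by rintro rfl; exact hn hs
  exact Finset.mem_Icc.2 (by omega)

lemma subset_erase {n : ℕ} {S : Finset ℕ} (h : S ⊆ Finset.Icc 1 (n + 1)) :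
    S.erase (n + 1) ⊆ Finset.Icc 1 n :=
  subset_of_notMem ((Finset.erase_subset _ _).trans h) (by simp)

/-- The denominator in the recursion for `χ` does not vanish. -/
lemma denom_ne {n : ℕ} {S : Finset ℕ} (h : S ⊆ Finset.Icc 1 (n + 1)) (hb : Ballot S)
    (hn : n + 1 ∈ S) : (n : ℝ) - 2 * (S.erase (n + 1)).card ≠ 0 := by
  have h1 := hb (n + 1)
  rw [Finset.filter_true_of_mem fun s hs => (Finset.mem_Icc.1 (h hs)).2] at h1
  have hc := Finset.card_erase_add_one hn
  have h2 : 2 * (S.erase (n + 1)).card + 1 ≤ n := by omega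
  have h3 : (2 * (S.erase (n + 1)).card + 1 : ℝ) ≤ n := by exact_mod_cast h2
  intro h0
  linarith

/-! ### Harmonicity and orthogonality -/

/-- A harmonic `χ_{n,S}` is an eigenvector of `D U`, by the commutation relation. -/
lemma D_U_X {n : ℕ} {S : Finset ℕ} (h : ∀ x, D (X n S) x = 0) (x : Fin n → Bool) :
    D (U (X n S)) x = ((n : ℝ) - 2 * S.card) * X n S x := by
  rw [comm, funext h, U_zero, zero_add]
  by_cases hx : wt x = S.card
  · rw [hx]
  · rw [X_of_wt_ne hx, mul_zero, mul_zero]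

/-- Each `χ_{n,S}` is harmonic, that is, annihilated by the down operator. -/
lemma D_X : ∀ {n : ℕ} {S : Finset ℕ}, S ⊆ Finset.Icc 1 n → Ballot S → ∀ x, D (X n S) x = 0 := by
  intro n
  induction n with
  | zero => intro S _ _ x; simp [D]
  | succ n ih =>
    intro S hS hb x
    obtain ⟨x, b, rfl⟩ := exists_app x
    by_cases hn : n + 1 ∈ S
    · have hT := ih (subset_erase hS) (hb.erase (n + 1))
      cases b
      · simp only [D_app_false, X_mem_false hn, X_mem_true hn, D_mul, D_U_X hT]
        rw [← mul_assoc, neg_mul, inv_mul_cancel₀ (denom_ne hS hb hn)]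
        ring
      · simp only [D_app_true, X_mem_true hn, hT]
    · cases b
      · simp only [D_app_false, X_notMem_false hn, X_notMem_true hn, add_zero]
        exact ih (subset_of_notMem hS hn) hb x
      · simp only [D_app_true, X_notMem_true hn, D_zero]

/-- The case of orthogonality where exactly one of the sets contains the last element. -/
lemma orth_mixed {n : ℕ} {S₁ S₂ : Finset ℕ} (h₂ : S₂ ⊆ Finset.Icc 1 (n + 1)) (b₂ : Ballot S₂)
    (m₁ : n + 1 ∈ S₁) (m₂ : n + 1 ∉ S₂) :
    ∑ x, X (n + 1) S₁ x * X (n + 1) S₂ x = 0 := by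
  simp only [sum_app, X_mem_false m₁, X_notMem_false m₂, X_notMem_true m₂, mul_zero,
    Finset.sum_const_zero, add_zero, mul_assoc]
  rw [← Finset.mul_sum, adj]
  simp [D_X (subset_of_notMem h₂ m₂) b₂]

lemma orth : ∀ {n : ℕ} {S₁ S₂ : Finset ℕ}, S₁ ⊆ Finset.Icc 1 n → S₂ ⊆ Finset.Icc 1 n →
    Ballot S₁ → Ballot S₂ → S₁ ≠ S₂ → ∑ x, X n S₁ x * X n S₂ x = 0 := by
  intro n
  induction n with
  | zero =>
    intro S₁ S₂ h₁ h₂ _ _ hne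
    simp only [Finset.Icc_eq_empty_of_lt one_pos, Finset.subset_empty] at h₁ h₂
    exact absurd (h₁.trans h₂.symm) hne
  | succ n ih =>
    intro S₁ S₂ h₁ h₂ b₁ b₂ hne
    by_cases m₁ : n + 1 ∈ S₁ <;> by_cases m₂ : n + 1 ∈ S₂
    · have hne' : S₁.erase (n + 1) ≠ S₂.erase (n + 1) := fun h =>
        hne (by rw [← Finset.insert_erase m₁, h, Finset.insert_erase m₂])
      have h0 := ih (subset_erase h₁) (subset_erase h₂) (b₁.erase _) (b₂.erase _) hne'
      have hU : ∑ x, U (X n (S₁.erase (n + 1))) x * U (X n (S₂.erase (n + 1))) x = 0 := by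
        rw [adj]
        simp only [D_U_X (D_X (subset_erase h₂) (b₂.erase _)), mul_left_comm]
        rw [← Finset.mul_sum, h0, mul_zero]
      simp only [sum_app, X_mem_false m₁, X_mem_false m₂, X_mem_true m₁, X_mem_true m₂,
        h0, add_zero, mul_mul_mul_comm]
      rw [← Finset.mul_sum, hU, mul_zero]
    · exact orth_mixed h₂ b₂ m₁ m₂
    · simp only [mul_comm (X (n + 1) S₁ _)]
      exact orth_mixed h₁ b₁ m₂ m₁
    · simp only [sum_app, X_notMem_false m₁, X_notMem_false m₂, X_notMem_true m₁, zero_mul,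
        Finset.sum_const_zero, add_zero]
      exact ih (subset_of_notMem h₁ m₁) (subset_of_notMem h₂ m₂) b₁ b₂ hne

end SliceOrth

/-- For `k ≤ n/2` and distinct `S₁, S₂ ∈ H_{n,k}` of the same size,
`⟨χ_{n,S₁}, χ_{n,S₂}⟩ = 0`. -/
theorem stmt6 (n k : ℕ) (hk : 2 * k ≤ n) (S₁ S₂ : Finset ℕ)
    (h₁ : IsH n k S₁) (h₂ : IsH n k S₂) (hcard : S₁.card = S₂.card) (hne : S₁ ≠ S₂) :
    ∑ x : Slice n S₁.card,
        chi n S₁ x * chi n S₂ ⟨x.1, by rw [← hcard]; exact x.2⟩ = 0 := by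
  rw [← SliceOrth.orth h₁.1 h₂.1 (SliceOrth.ballot_of_isH h₁) (SliceOrth.ballot_of_isH h₂) hne]
  symm
  rw [← Finset.sum_filter_of_ne
    (p := fun x : Fin n → Bool => (Finset.univ.filter fun i => x i = true).card = S₁.card)
    fun x _ hx => by
      by_contra h
      exact hx (by rw [SliceOrth.X_of_wt_ne h, zero_mul])]
  rw [Finset.sum_subtype (p := fun x : Fin n → Bool =>
    (Finset.univ.filter fun i => x i = true).card = S₁.card) _ (by simp)]
  refine Finset.sum_congr rfl fun x _ => ?_
  rw [SliceOrth.X_of_wt_eq x.2, SliceOrth.X_of_wt_eq (x.2.trans hcard)]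
end

section
/- The number of subsets S of [n] of size m whose elements s₁ < s₂ < ⋯ < s_m satisfy s_j ≥ 2j for all j equals C(n,m) − C(n,m−1) for 1 ≤ m ≤ n/2; consequently, for k ≤ n/2 the total number of sets in H_{n,k} is C(n,k). -/
/-!
The condition `s_j ≥ 2j` is the ballot condition on the lattice path with an up step at each element
of `S`, and the count is the ballot number. Write `A(n,m)` for the number of admissible `m`-subsets
of `[n]`. Removing the element `n + 1`, when present, leaves an admissible set, and `n + 1` may be
appended to an admissible `m`-set exactly when `2(m + 1) ≤ n + 1` (`ballot_insert`). Hence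
`A(n+1,m+1) = A(n,m+1) + [2(m+1) ≤ n+1] A(n,m)` (`ballotCount_succ`), which is Pascal's rule for
`C(n,m) - C(n,m-1)`. The induction (`ballotCount_eq`) is run on the range `2m ≤ n + 1`, one step
beyond the stated one, so that it closes; on the boundary `2m = n + 1` both sides vanish.
The second claim telescopes over the sizes `0, …, k`.
-/

open scoped Classical

/-- The `j`-th smallest element of `S` (counting from one) is at least `2j`, for every `j`. -/
def Ballot (S : Finset ℕ) : Prop :=
  ∀ j, j < S.card → 2 * (j + 1) ≤ (S.sort (· ≤ ·)).getD j 0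

/-- The number of `m`-element subsets of `{1, …, n}` satisfying `Ballot`. -/
noncomputable def ballotCount (n m : ℕ) : ℕ :=
  ((Finset.Icc 1 n).powerset.filter fun S => S.card = m ∧ Ballot S).card

lemma sort_insert_succ {n : ℕ} {S : Finset ℕ} (hS : S ⊆ Finset.Icc 1 n) :
    (insert (n + 1) S).sort (· ≤ ·) = S.sort (· ≤ ·) ++ [n + 1] := by
  have hn : n + 1 ∉ S := fun h => by simpa using hS h
  refine List.Perm.eq_of_pairwise' (r := (· ≤ ·)) (Finset.pairwise_sort _ _) ?_ ?_
  · rw [List.pairwise_append]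
    refine ⟨Finset.pairwise_sort _ _, by simp, ?_⟩
    intro a ha b hb
    have h1 := Finset.mem_Icc.mp (hS ((Finset.mem_sort _).mp ha))
    simp only [List.mem_singleton] at hb
    omega
  · rw [List.perm_ext_iff_of_nodup (Finset.sort_nodup _ _)]
    · intro a
      simp [or_comm]
    · rw [List.nodup_append]
      refine ⟨Finset.sort_nodup _ _, by simp, ?_⟩
      intro a ha b hb hab
      simp only [List.mem_singleton] at hb
      exact hn (by rw [← hb, ← hab]; exact (Finset.mem_sort _).mp ha)

lemma ballot_insert {n : ℕ} {S : Finset ℕ} (hS : S ⊆ Finset.Icc 1 n) :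
    Ballot (insert (n + 1) S) ↔ Ballot S ∧ 2 * (S.card + 1) ≤ n + 1 := by
  have hn : n + 1 ∉ S := fun h => by simpa using hS h
  have hlast : (S.sort (· ≤ ·) ++ [n + 1]).getD S.card 0 = n + 1 := by
    rw [List.getD_append_right _ _ _ _ (by simp)]
    simp
  have hinit : ∀ j, j < S.card →
      (S.sort (· ≤ ·) ++ [n + 1]).getD j 0 = (S.sort (· ≤ ·)).getD j 0 := fun j hj =>
    List.getD_append _ _ _ _ (by simpa using hj)
  unfold Ballot
  rw [sort_insert_succ hS, Finset.card_insert_of_notMem hn]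
  constructor
  · intro h
    refine ⟨fun j hj => ?_, ?_⟩
    · rw [← hinit j hj]
      exact h j (by omega)
    · have := h S.card (by omega)
      rwa [hlast] at this
  · rintro ⟨h1, h2⟩ j hj
    rcases Nat.lt_succ_iff_lt_or_eq.mp hj with hj | rfl
    · rw [hinit j hj]
      exact h1 j hj
    · rwa [hlast]

lemma ballotCount_zero (n : ℕ) : ballotCount n 0 = 1 := by
  rw [ballotCount, Finset.card_eq_one]
  refine ⟨∅, ?_⟩
  ext S
  simp only [Finset.mem_filter, Finset.mem_powerset, Finset.card_eq_zero, Finset.mem_singleton]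
  constructor
  · exact fun h => h.2.1
  · rintro rfl
    exact ⟨by simp, rfl, fun j hj => by simp at hj⟩

/-- Pascal-type recursion, splitting according to whether `n + 1` belongs to the set. -/
lemma ballotCount_succ (n m : ℕ) :
    ballotCount (n + 1) (m + 1) =
      ballotCount n (m + 1) + if 2 * (m + 1) ≤ n + 1 then ballotCount n m else 0 := by
  have hn : ∀ {S}, S ⊆ Finset.Icc 1 n → n + 1 ∉ S := fun hS h => by simpa using hS h
  have hIcc : Finset.Icc 1 (n + 1) = insert (n + 1) (Finset.Icc 1 n) := by
    ext a
    simp only [Finset.mem_Icc, Finset.mem_insert]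
    omega
  have hinj : Set.InjOn (insert (n + 1)) ((Finset.Icc 1 n).powerset : Set (Finset ℕ)) := by
    intro S hS T hT h
    have hS' := hn (Finset.mem_powerset.mp hS)
    have hT' := hn (Finset.mem_powerset.mp hT)
    rw [← Finset.erase_insert hS', ← Finset.erase_insert hT']
    exact congrArg (fun U => Finset.erase U (n + 1)) h
  rw [ballotCount, hIcc, Finset.powerset_insert, Finset.filter_union,
    Finset.card_union_of_disjoint]
  · congr 1
    rw [Finset.filter_image,
      Finset.card_image_of_injOn
        (hinj.mono (Finset.coe_subset.mpr (Finset.filter_subset _ _)))]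
    have hiff : ∀ S ∈ (Finset.Icc 1 n).powerset,
        ((insert (n + 1) S).card = m + 1 ∧ Ballot (insert (n + 1) S) ↔
          (S.card = m ∧ Ballot S) ∧ 2 * (m + 1) ≤ n + 1) := by
      intro S hS
      rw [Finset.mem_powerset] at hS
      rw [Finset.card_insert_of_notMem (hn hS), ballot_insert hS]
      constructor
      · rintro ⟨h1, h2, h3⟩
        obtain rfl : S.card = m := by omega
        exact ⟨⟨rfl, h2⟩, h3⟩
      · rintro ⟨⟨rfl, h2⟩, h3⟩
        exact ⟨rfl, h2, h3⟩
    rw [Finset.filter_congr hiff]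
    split_ifs with h
    · simp only [h, and_true, ballotCount]
    · simp [h]
  · rw [Finset.disjoint_left]
    intro S hS hS'
    rw [Finset.mem_filter, Finset.mem_powerset] at hS
    rw [Finset.mem_filter, Finset.mem_image] at hS'
    obtain ⟨⟨T, -, rfl⟩, -⟩ := hS'
    exact hn hS.1 (Finset.mem_insert_self _ _)

lemma ballotCount_eq_zero {n m : ℕ} (h : n < 2 * m) : ballotCount n m = 0 := by
  induction n generalizing m with
  | zero =>
    obtain ⟨m, rfl⟩ : ∃ k, m = k + 1 := ⟨m - 1, by omega⟩
    rw [ballotCount, Finset.card_eq_zero, Finset.filter_eq_empty_iff]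
    rintro S hS ⟨h1, -⟩
    have : S = ∅ := by simpa using hS
    simp [this] at h1
  | succ n ih =>
    obtain ⟨m, rfl⟩ : ∃ k, m = k + 1 := ⟨m - 1, by omega⟩
    rw [ballotCount_succ, ih (by omega), if_neg (by omega)]

lemma ballotCount_eq {n m : ℕ} (h : 2 * (m + 1) ≤ n + 1) :
    (ballotCount n (m + 1) : ℤ) = (n.choose (m + 1) : ℤ) - (n.choose m : ℤ) := by
  induction n generalizing m with
  | zero => omega
  | succ n ih =>
    rcases Nat.lt_or_ge (n + 1) (2 * (m + 1)) with hb | hb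
    · -- Boundary case: the two binomial coefficients are symmetric about the middle.
      rw [ballotCount_eq_zero hb, Nat.choose_symm_of_eq_add (by omega : n + 1 = m + 1 + m)]
      simp
    · rw [ballotCount_succ, if_pos hb, Nat.cast_add, ih hb]
      cases m with
      | zero => simp [ballotCount_zero]
      | succ m =>
        rw [ih (by omega), Nat.choose_succ_succ n (m + 1), Nat.choose_succ_succ n m]
        push_cast
        ring

/-- Admissible sets of size at most `k + 1` are those of size at most `k` and those of size exactly
`k + 1`. -/
lemma card_isH_succ (n k : ℕ) :
    ((Finset.Icc 1 n).powerset.filter fun S => IsH n (k + 1) S).card =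
      ((Finset.Icc 1 n).powerset.filter fun S => IsH n k S).card + ballotCount n (k + 1) := by
  rw [ballotCount, ← Finset.card_union_of_disjoint]
  · congr 1
    ext S
    rw [Finset.mem_union, Finset.mem_filter, Finset.mem_filter, Finset.mem_filter,
      Finset.mem_powerset]
    unfold IsH Ballot
    rw [Nat.le_succ_iff]
    tauto
  · rw [Finset.disjoint_left]
    intro S hS hS'
    have h1 := (Finset.mem_filter.mp hS).2.2.1
    have h2 := (Finset.mem_filter.mp hS').2.1
    omega

lemma card_isH_zero (n : ℕ) :
    ((Finset.Icc 1 n).powerset.filter fun S => IsH n 0 S).card = 1 := by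
  refine Eq.trans ?_ (ballotCount_zero n)
  rw [ballotCount]
  congr 1
  ext S
  rw [Finset.mem_filter, Finset.mem_filter, Finset.mem_powerset]
  unfold IsH Ballot
  rw [Nat.le_zero]
  tauto

/-- The number of subsets of `[n]` of size `m` with `j`-th smallest element at
least `2j` is `C(n,m) - C(n,m-1)` for `1 ≤ m ≤ n/2`; consequently `|H_{n,k}| = C(n,k)`
for `k ≤ n/2`. -/
theorem stmt7 (n : ℕ) :
    (∀ m : ℕ, 1 ≤ m → 2 * m ≤ n →
        ((((Finset.Icc 1 n).powerset).filter fun S =>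
              S.card = m ∧ ∀ j, j < S.card → 2 * (j + 1) ≤ (S.sort (· ≤ ·)).getD j 0).card : ℤ)
          = (n.choose m : ℤ) - (n.choose (m - 1) : ℤ)) ∧
    (∀ k : ℕ, 2 * k ≤ n →
        (((Finset.Icc 1 n).powerset).filter fun S => IsH n k S).card = n.choose k) := by
  refine ⟨fun m hm hmn => ?_, fun k hk => ?_⟩
  · obtain ⟨m, rfl⟩ : ∃ k, m = k + 1 := ⟨m - 1, by omega⟩
    rw [Nat.add_sub_cancel, ← ballotCount_eq (by omega : 2 * (m + 1) ≤ n + 1), ballotCount]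
    unfold Ballot
    congr!
  · induction k with
    | zero => rw [card_isH_zero, Nat.choose_zero_right]
    | succ k ih =>
      have h1 := ih (by omega)
      have h2 := ballotCount_eq (by omega : 2 * (k + 1) ≤ n + 1)
      rw [card_isH_succ, h1]
      omega
end

section
/- For 0 ≤ k ≤ n, the set of vectors {P↑_{n,|S|,k} χ_{n,S} : S ∈ H_{n,min{k,n−k}}} forms an orthogonal basis of R^{C([n],k)} consisting of eigenvectors of A_{n,k}, the adjacency matrix of the Johnson graph. -/
/-!
Extending functions on a slice by zero turns them into functions on the cube `{0,1}^n`, where the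
up operator `U`, its transpose `D = Uᵀ` and the Johnson adjacency matrix `A` act on all levels at
once. Splitting the cube along its last coordinate gives recursive formulas for `U`, `D` and `A`;
from these, induction on `n` yields `D U = A + (n - |x|)` and `D U = U D + (n - 2|x|)`.

Each `χ_S` is harmonic, i.e. killed by `D` (`charVec_harmonic`). For a harmonic `f` of
degree `d` the commutation relation gives `D U^{j+1} f = (j+1)(n-2d-j) U^j f` (`down_up_pow`).
This formula shows that `U^j f` is an eigenvector of `A`, that
`⟨U^{a+j} f, U^j g⟩` is a positive multiple of `⟨U^a f, g⟩` as long as `2d + a + j ≤ n`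
(`dot_up_pow`), and hence that the basis vectors are nonzero. Vectors coming from different degrees
are orthogonal because the top one is harmonic; for equal degrees orthogonality reduces to that of
the `χ_S`, which is again an induction on `n` (`charVec_orth`).

For the span it suffices to count. For `S ⊆ [n]` of size at most `k`, membership in `H_{n,k}` is
equivalent to the ballot condition `2 |S ∩ [m]| ≤ m` for all `m` (`isH_iff`), and Pascal's rule shows that there are `C(n,k)` such sets of size
at most `k` when `2k ≤ n + 1` (`card_ballotSets`). So the orthogonal nonzero vectors are as many as
the dimension.
-/

open scoped Classical

namespace SliceBasis

open Matrix

/-! ### Operators on the whole cube -/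

/-- The up operator on functions on the cube `{0,1}^n`, acting on all levels simultaneously.
Its transpose is the down operator. -/
noncomputable def U (n : ℕ) : Matrix (Fin n → Bool) (Fin n → Bool) ℝ :=
  Matrix.of fun x y => if (∀ i, y i = true → x i = true) ∧ wt x = wt y + 1 then (1 : ℝ) else 0

/-- The Hamming distance between two points of the cube. -/
def hd {n : ℕ} (x y : Fin n → Bool) : ℕ := (Finset.univ.filter fun i => x i ≠ y i).card

/-- The adjacency matrix of the disjoint union of the Johnson graphs on all levels of the cube. -/
noncomputable def A (n : ℕ) : Matrix (Fin n → Bool) (Fin n → Bool) ℝ :=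
  Matrix.of fun x y => if hd x y = 2 ∧ wt x = wt y then (1 : ℝ) else 0

/-- Appending a last coordinate to a point of the cube. -/
def app {n : ℕ} (x : Fin n → Bool) (b : Bool) : Fin (n + 1) → Bool :=
  Fin.snoc (α := fun _ => Bool) x b

@[simp] lemma app_last {n : ℕ} (x : Fin n → Bool) (b : Bool) : app x b (Fin.last n) = b := by
  simp [app]

@[simp] lemma app_castSucc {n : ℕ} (x : Fin n → Bool) (b : Bool) (i : Fin n) :
    app x b (Fin.castSucc i) = x i := by
  simp [app]

lemma app_eta {n : ℕ} (z : Fin (n + 1) → Bool) :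
    app (fun i => z (Fin.castSucc i)) (z (Fin.last n)) = z := by
  funext i
  refine Fin.lastCases ?_ (fun i => ?_) i <;> simp

lemma wt_app_false {n : ℕ} (x : Fin n → Bool) : wt (app x false) = wt x := by
  simpa [wt] using (wcast_false (app x false) (by simp)).symm

lemma wt_app_true {n : ℕ} (x : Fin n → Bool) : wt (app x true) = wt x + 1 := by
  simpa [wt] using (wcast_true (app x true) (by simp)).symm

lemma hd_app {n : ℕ} (x y : Fin n → Bool) (b c : Bool) :
    hd (app x b) (app y c) = hd x y + if b = c then 0 else 1 := by
  unfold hd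
  rw [Finset.card_filter, Finset.card_filter, Fin.sum_univ_castSucc]
  cases b <;> cases c <;> simp

lemma sum_app {n : ℕ} (g : (Fin (n + 1) → Bool) → ℝ) :
    ∑ z, g z = ∑ y, g (app y false) + ∑ y, g (app y true) := by
  rw [← (Fin.snocEquiv (fun _ : Fin (n + 1) => Bool)).sum_comp, Fintype.sum_prod_type,
    Fintype.sum_bool, add_comm]
  rfl

lemma dot_app {n : ℕ} (f g : (Fin (n + 1) → Bool) → ℝ) :
    f ⬝ᵥ g = (fun x => f (app x false)) ⬝ᵥ (fun x => g (app x false)) +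
      (fun x => f (app x true)) ⬝ᵥ (fun x => g (app x true)) :=
  sum_app _

/-- `|x \ y| + |y \ x| + |y| = |x| + 2 |y \ x|`. Since `y ≤ x` means `|y \ x| = 0`, the order
relation can be read off from the distance and the weights. -/
lemma hd_add_wt {n : ℕ} (x y : Fin n → Bool) :
    hd x y + wt y = wt x + 2 * (Finset.univ.filter fun i => y i = true ∧ x i = false).card := by
  unfold hd wt
  simp only [Finset.card_filter, Finset.mul_sum, ← Finset.sum_add_distrib]
  refine Finset.sum_congr rfl fun i _ => ?_
  cases x i <;> cases y i <;> simp

lemma le_iff {n : ℕ} (x y : Fin n → Bool) : (∀ i, y i = true → x i = true) ↔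
    (Finset.univ.filter fun i => y i = true ∧ x i = false).card = 0 := by
  simp [Finset.filter_eq_empty_iff]

lemma hd_one_iff {n : ℕ} (x y : Fin n → Bool) :
    (hd x y = 1 ∧ wt x = wt y + 1) ↔ ((∀ i, y i = true → x i = true) ∧ wt x = wt y + 1) := by
  rw [le_iff]
  have := hd_add_wt x y
  omega

lemma hd_comm {n : ℕ} (x y : Fin n → Bool) : hd x y = hd y x := by
  simp [hd, ne_comm]

lemma le_eq {n : ℕ} (x y : Fin n → Bool) (h : wt x = wt y) :
    (∀ i, y i = true → x i = true) ↔ x = y := by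
  constructor
  · rw [le_iff]
    intro h1
    have h2 := hd_add_wt x y
    have h3 : hd x y = 0 := by omega
    simp [hd, Finset.filter_eq_empty_iff] at h3
    exact funext h3
  · rintro rfl
    simp

lemma le_app {n : ℕ} (x y : Fin n → Bool) (b c : Bool) :
    (∀ i, app y c i = true → app x b i = true) ↔
      (∀ i, y i = true → x i = true) ∧ (c = true → b = true) := by
  rw [Fin.forall_fin_succ']
  simp

/-! ### Recursion along the last coordinate -/

lemma U_ff {n : ℕ} (x y : Fin n → Bool) : U (n + 1) (app x false) (app y false) = U n x y := by
  simp only [U, of_apply, le_app, wt_app_false]; simp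

lemma U_ft {n : ℕ} (x y : Fin n → Bool) : U (n + 1) (app x false) (app y true) = 0 := by
  simp only [U, of_apply, le_app]; simp

lemma U_tt {n : ℕ} (x y : Fin n → Bool) : U (n + 1) (app x true) (app y true) = U n x y := by
  simp only [U, of_apply, le_app, wt_app_true]; simp

lemma U_tf {n : ℕ} (x y : Fin n → Bool) :
    U (n + 1) (app x true) (app y false) = if x = y then 1 else 0 := by
  simp only [U, of_apply, le_app, wt_app_true, wt_app_false]
  by_cases h : x = y
  · subst h; simp
  · rw [if_neg h, if_neg]
    rintro ⟨⟨h1, -⟩, h2⟩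
    exact h ((le_eq x y (by omega)).1 h1)

section
variable {n : ℕ} (f : (Fin (n + 1) → Bool) → ℝ) (x : Fin n → Bool)

lemma U_false : (U (n + 1) *ᵥ f) (app x false) = (U n *ᵥ fun y => f (app y false)) x := by
  simp [mulVec, dotProduct, sum_app, U_ff, U_ft]

lemma U_true : (U (n + 1) *ᵥ f) (app x true) =
    (U n *ᵥ fun y => f (app y true)) x + f (app x false) := by
  simp [mulVec, dotProduct, sum_app, U_tf, U_tt, add_comm]

lemma D_false : ((U (n + 1))ᵀ *ᵥ f) (app x false) =
    ((U n)ᵀ *ᵥ fun y => f (app y false)) x + f (app x true) := by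
  simp [mulVec, dotProduct, sum_app, U_ff, U_tf]

lemma D_true : ((U (n + 1))ᵀ *ᵥ f) (app x true) = ((U n)ᵀ *ᵥ fun y => f (app y true)) x := by
  simp [mulVec, dotProduct, sum_app, U_ft, U_tt]

lemma A_same (y : Fin n → Bool) (b : Bool) : A (n + 1) (app x b) (app y b) = A n x y := by
  cases b <;> simp [A, hd_app, wt_app_true, wt_app_false]

lemma A_ft (y : Fin n → Bool) : A (n + 1) (app x false) (app y true) = U n x y := by
  simp only [A, U, of_apply, ← hd_one_iff, hd_app, wt_app_true, wt_app_false]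
  simp

lemma A_tf (y : Fin n → Bool) : A (n + 1) (app x true) (app y false) = U n y x := by
  simp only [A, U, of_apply, ← hd_one_iff, hd_app, wt_app_true, wt_app_false, hd_comm x y,
    eq_comm (a := wt x + 1)]
  simp

lemma A_false : (A (n + 1) *ᵥ f) (app x false) =
    (A n *ᵥ fun y => f (app y false)) x + (U n *ᵥ fun y => f (app y true)) x := by
  simp [mulVec, dotProduct, sum_app, A_same, A_ft]

lemma A_true : (A (n + 1) *ᵥ f) (app x true) =
    (A n *ᵥ fun y => f (app y true)) x + ((U n)ᵀ *ᵥ fun y => f (app y false)) x := by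
  simp [mulVec, dotProduct, sum_app, A_same, A_tf, add_comm]

end

lemma fun_add {α : Type*} (f g : α → ℝ) : (fun y => f y + g y) = f + g := rfl

lemma mulVec_zero_dim (M : Matrix (Fin 0 → Bool) (Fin 0 → Bool) ℝ) (f : (Fin 0 → Bool) → ℝ)
    (x : Fin 0 → Bool) : (M *ᵥ f) x = M x x * f x := by
  simp only [mulVec, dotProduct]
  rw [Fintype.sum_subsingleton _ x]

/-- Moving up and then down either returns to the start, in `n - |x|` ways, or makes a step in the
Johnson graph. -/
lemma down_up {n : ℕ} (f : (Fin n → Bool) → ℝ) (x : Fin n → Bool) :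
    ((U n)ᵀ *ᵥ (U n *ᵥ f)) x = (A n *ᵥ f) x + ((n : ℝ) - wt x) * f x := by
  induction n with
  | zero => simp [mulVec_zero_dim, U, A, wt, hd]
  | succ n ih =>
    rw [← app_eta x]
    cases x (Fin.last n)
    · rw [D_false, A_false, U_true]
      simp only [U_false, wt_app_false]
      rw [ih]; push_cast; ring
    · rw [D_true, A_true]
      simp only [U_true, wt_app_true, fun_add, mulVec_add, Pi.add_apply]
      rw [ih]; push_cast; ring

lemma comm_rel {n : ℕ} (f : (Fin n → Bool) → ℝ) (x : Fin n → Bool) :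
    ((U n)ᵀ *ᵥ (U n *ᵥ f)) x = (U n *ᵥ ((U n)ᵀ *ᵥ f)) x + ((n : ℝ) - 2 * wt x) * f x := by
  induction n with
  | zero => simp [mulVec_zero_dim, U, wt]
  | succ n ih =>
    rw [← app_eta x]
    cases x (Fin.last n)
    · rw [D_false, U_true, U_false]
      simp only [U_false, D_false, wt_app_false, fun_add, mulVec_add, Pi.add_apply]
      rw [ih]; push_cast; ring
    · rw [D_true, U_true, D_false]
      simp only [U_true, D_true, wt_app_true, fun_add, mulVec_add, Pi.add_apply]
      rw [ih]; push_cast; ring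

/-! ### Harmonic functions -/

/-- `f` is supported on the `d`-th level of the cube. -/
def Lev {n : ℕ} (d : ℕ) (f : (Fin n → Bool) → ℝ) : Prop := ∀ x, wt x ≠ d → f x = 0

lemma Lev.up {n d : ℕ} {f : (Fin n → Bool) → ℝ} (h : Lev d f) : Lev (d + 1) (U n *ᵥ f) := by
  intro x hx
  refine Finset.sum_eq_zero fun y _ => ?_
  by_cases hy : wt y = d
  · have : ¬ (wt x = wt y + 1) := by omega
    simp [U, this]
  · simp [h y hy]

lemma pow_succ_mulVec {n : ℕ} (f : (Fin n → Bool) → ℝ) (j : ℕ) :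
    (U n ^ (j + 1)) *ᵥ f = U n *ᵥ ((U n ^ j) *ᵥ f) := by
  rw [pow_succ', mulVec_mulVec]

lemma Lev.up_pow {n d : ℕ} {f : (Fin n → Bool) → ℝ} (h : Lev d f) (j : ℕ) :
    Lev (d + j) ((U n ^ j) *ᵥ f) := by
  induction j with
  | zero => simpa using h
  | succ j ih => rw [pow_succ_mulVec]; exact ih.up

lemma Lev.mul_wt {n d : ℕ} {f : (Fin n → Bool) → ℝ} (h : Lev d f) (x : Fin n → Bool) :
    (wt x : ℝ) * f x = d * f x := by
  by_cases hx : wt x = d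
  · rw [hx]
  · simp [h x hx]

/-- The `sl₂`-type relation for the up and down operators on a lowest weight vector. -/
lemma down_up_pow {n d : ℕ} {f : (Fin n → Bool) → ℝ} (h : Lev d f) (hD : (U n)ᵀ *ᵥ f = 0)
    (j : ℕ) : (U n)ᵀ *ᵥ ((U n ^ (j + 1)) *ᵥ f) =
      (((j : ℝ) + 1) * (n - 2 * d - j)) • ((U n ^ j) *ᵥ f) := by
  induction j with
  | zero =>
    funext x
    rw [pow_succ_mulVec, comm_rel]
    have := h.mul_wt x
    simp only [pow_zero, one_mulVec, hD, mulVec_zero, Pi.zero_apply, Pi.smul_apply, smul_eq_mul]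
    push_cast
    linear_combination (-2) * this
  | succ j ih =>
    funext x
    rw [pow_succ_mulVec, comm_rel, ih]
    have := (h.up_pow (j + 1)).mul_wt x
    simp only [mulVec_smul, Pi.smul_apply, smul_eq_mul, ← pow_succ_mulVec]
    push_cast at *
    linear_combination (-2) * this

lemma dot_up {n : ℕ} (f g : (Fin n → Bool) → ℝ) :
    f ⬝ᵥ (U n *ᵥ g) = ((U n)ᵀ *ᵥ f) ⬝ᵥ g := by
  rw [dotProduct_mulVec, mulVec_transpose]

lemma dot_up_pow {n d : ℕ} {f : (Fin n → Bool) → ℝ} (h : Lev d f) (hD : (U n)ᵀ *ᵥ f = 0)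
    (a j : ℕ) : ∃ c : ℝ, (2 * d + a + j ≤ n → 0 < c) ∧
      ∀ g, ((U n ^ (a + j)) *ᵥ f) ⬝ᵥ ((U n ^ j) *ᵥ g) = c * (((U n ^ a) *ᵥ f) ⬝ᵥ g) := by
  induction j with
  | zero => exact ⟨1, by simp, by simp⟩
  | succ j ih =>
    obtain ⟨c, hc, hg⟩ := ih
    refine ⟨(((a + j : ℕ) : ℝ) + 1) * (n - 2 * d - (a + j : ℕ)) * c, fun hn => ?_, fun g => ?_⟩
    · have h1 : ((2 * d + a + (j + 1) : ℕ) : ℝ) ≤ n := by exact_mod_cast hn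
      push_cast at h1 ⊢
      have := hc (by omega)
      have : (0 : ℝ) < n - 2 * d - (a + j) := by linarith
      positivity
    · rw [pow_succ_mulVec g, dot_up, ← add_assoc, down_up_pow h hD, smul_dotProduct, hg,
        smul_eq_mul]
      ring

/-- Functions induced from harmonic functions of different degrees `d` and `d + a + 1`
are orthogonal. -/
lemma dot_up_pow_ne {n d : ℕ} {f g : (Fin n → Bool) → ℝ} (h : Lev d f) (hD : (U n)ᵀ *ᵥ f = 0)
    (hg : (U n)ᵀ *ᵥ g = 0) (a j : ℕ) :
    ((U n ^ (a + 1 + j)) *ᵥ f) ⬝ᵥ ((U n ^ j) *ᵥ g) = 0 := by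
  obtain ⟨c, -, hc⟩ := dot_up_pow h hD (a + 1) j
  rw [hc, pow_succ_mulVec, dotProduct_comm, dot_up, hg]
  simp

lemma A_eigen {n d : ℕ} {f : (Fin n → Bool) → ℝ} (h : Lev d f) (hD : (U n)ᵀ *ᵥ f = 0) (j : ℕ) :
    ∃ μ : ℝ, A n *ᵥ ((U n ^ j) *ᵥ f) = μ • ((U n ^ j) *ᵥ f) := by
  refine ⟨((j : ℝ) + 1) * (n - 2 * d - j) - (n - (d + j : ℕ)), ?_⟩
  funext x
  have h1 := down_up ((U n ^ j) *ᵥ f) x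
  have h2 := (h.up_pow j).mul_wt x
  rw [← pow_succ_mulVec, down_up_pow h hD] at h1
  simp only [Pi.smul_apply, smul_eq_mul] at h1 ⊢
  linear_combination (-1) * h1 + h2

/-! ### Extension by zero from a slice -/

/-- Extension by zero of a function on a slice to the whole cube. -/
noncomputable def ext {n k : ℕ} (f : Slice n k → ℝ) : (Fin n → Bool) → ℝ :=
  fun x => if h : wt x = k then f ⟨x, h⟩ else 0

lemma ext_coe {n k : ℕ} (f : Slice n k → ℝ) (x : Slice n k) : ext f x.1 = f x := by
  have : wt x.1 = k := x.2
  simp [ext, this]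

lemma ext_lev {n k : ℕ} (f : Slice n k → ℝ) : Lev k (ext f) := fun x hx => by simp [ext, hx]

lemma ext_eq_iff {n k : ℕ} (f : Slice n k → ℝ) {g : (Fin n → Bool) → ℝ} (hg : Lev k g) :
    ext f = g ↔ ∀ x : Slice n k, f x = g x.1 := by
  constructor
  · rintro rfl x; rw [ext_coe]
  · intro h
    funext x
    by_cases hx : wt x = k
    · simp [ext, hx, h ⟨x, hx⟩]
    · rw [ext_lev f x hx, hg x hx]

lemma sum_slice {n k : ℕ} (g : (Fin n → Bool) → ℝ) (hg : Lev k g) :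
    ∑ x : Slice n k, g x.1 = ∑ x, g x := by
  rw [← Finset.sum_filter_of_ne (p := fun x => wt x = k)
    (fun x _ hx => by by_contra h; exact hx (hg x h))]
  exact (Finset.sum_subtype _ (fun x => Finset.mem_filter_univ x) g).symm

lemma ext_dot {n k : ℕ} (f g : Slice n k → ℝ) : ∑ x, f x * g x = ext f ⬝ᵥ ext g := by
  rw [dotProduct, ← sum_slice (k := k) _ (fun x hx => by simp [ext, hx])]
  simp [ext_coe]

lemma ext_up {n k : ℕ} (f : Slice n k → ℝ) : ext (upOp n k *ᵥ f) = U n *ᵥ ext f := by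
  rw [ext_eq_iff _ (ext_lev f).up]
  intro x
  have hx : wt x.1 = k + 1 := x.2
  simp only [mulVec, dotProduct]
  rw [← sum_slice (k := k) _ (fun y hy => by simp [ext, hy])]
  refine Finset.sum_congr rfl fun y _ => ?_
  have hy : wt y.1 = k := y.2
  rw [ext_coe]
  simp [upOp, U, hx, hy]

lemma ext_johnson {n k : ℕ} (f : Slice n k → ℝ) : ext (johnsonAdj n k *ᵥ f) = A n *ᵥ ext f := by
  rw [ext_eq_iff]
  · intro x
    have hx : wt x.1 = k := x.2
    simp only [mulVec, dotProduct]
    rw [← sum_slice (k := k) _ (fun y hy => by simp [ext, hy])]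
    refine Finset.sum_congr rfl fun y _ => ?_
    have hy : wt y.1 = k := y.2
    rw [ext_coe]
    simp [johnsonAdj, A, hd, hx, hy]
  · intro x hx
    refine Finset.sum_eq_zero fun y _ => ?_
    by_cases hy : wt y = k
    · have : wt x ≠ wt y := by omega
      simp [A, this]
    · simp [ext, hy]

lemma ext_upPathAux {n i : ℕ} (f : Slice n i → ℝ) (d : ℕ) :
    ext (upPathAux n i d *ᵥ f) = (U n ^ d) *ᵥ ext f := by
  induction d with
  | zero =>
    rw [pow_zero, one_mulVec]
    exact congrArg ext (one_mulVec f)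
  | succ d ih =>
    rw [pow_succ_mulVec, ← ih, ← ext_up, mulVec_mulVec]
    rfl

lemma ext_cast {n i d k : ℕ} (h : i + d = k) (f : Slice n i → ℝ)
    (h' : Matrix (Slice n (i + d)) (Slice n i) ℝ = Matrix (Slice n k) (Slice n i) ℝ) :
    ext (cast h' (upPathAux n i d) *ᵥ f) = (U n ^ d) *ᵥ ext f := by
  subst h
  exact ext_upPathAux f d

/-! ### The vectors `χ_S` -/

/-- The vector `χ_{n,S}`, extended by zero to the cube. -/
noncomputable def charVec (n : ℕ) (S : Finset ℕ) : (Fin n → Bool) → ℝ := ext (chi n S)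

lemma charVec_lev (n : ℕ) (S : Finset ℕ) : Lev S.card (charVec n S) := ext_lev _

lemma ext_basisVec {n k : ℕ} {S : Finset ℕ} (h : S.card ≤ k) :
    ext (basisVec n k S) = (U n ^ (k - S.card)) *ᵥ charVec n S := by
  rw [basisVec, upPath, dif_pos h]
  exact ext_cast (by omega) _ _

lemma charVec_notMem_true {n : ℕ} {S : Finset ℕ} (h : n + 1 ∉ S) (x : Fin n → Bool) :
    charVec (n + 1) S (app x true) = 0 := by
  simp [charVec, ext, chi, h]

lemma charVec_notMem_false {n : ℕ} {S : Finset ℕ} (h : n + 1 ∉ S) (x : Fin n → Bool) :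
    charVec (n + 1) S (app x false) = charVec n S x := by
  simp [charVec, ext, chi, h, wt_app_false, dropLast]

lemma charVec_mem_true {n : ℕ} {S : Finset ℕ} (h : n + 1 ∈ S) (x : Fin n → Bool) :
    charVec (n + 1) S (app x true) = charVec n (S.erase (n + 1)) x := by
  have h1 := Finset.card_erase_add_one h
  have h2 : (wt x + 1 = S.card) ↔ (wt x = (S.erase (n + 1)).card) := by omega
  simp only [charVec, ext, wt_app_true, h2]
  split_ifs with h3
  · simp [chi, h, dropLastT]
  · rfl

lemma charVec_mem_false {n : ℕ} {S : Finset ℕ} (h : n + 1 ∈ S) (x : Fin n → Bool) :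
    charVec (n + 1) S (app x false) =
      -((U n *ᵥ charVec n (S.erase (n + 1))) x / ((n : ℝ) - 2 * (S.erase (n + 1)).card)) := by
  have h1 := Finset.card_erase_add_one h
  have hc : (n : ℝ) + 1 - 2 * S.card + 1 = (n : ℝ) - 2 * (S.erase (n + 1)).card := by
    rw [← h1]; push_cast; ring
  by_cases hx : wt x = S.card
  · rw [charVec, charVec, ← ext_up]
    have hx' : wt x = (S.erase (n + 1)).card + 1 := by omega
    have hx2 : wt (app x false) = S.card := by rw [wt_app_false, hx]
    simp only [ext, hx2, hx', dif_pos]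
    rw [chi, dif_pos h]
    simp only [app_last, hc]
    rw [dif_neg (by simp), neg_div]
    congr 2
    simp [upOp, mulVec, dotProduct, dropLast]
  · rw [charVec_lev _ _ _ (by rwa [wt_app_false]), (charVec_lev n _).up x (by omega)]
    simp

/-! ### The ballot condition -/

/-- The ballot condition on `S ⊆ [n]`: every initial segment `[m]` contains at most `m / 2`
elements of `S`. -/
def Bal (n : ℕ) (S : Finset ℕ) : Prop :=
  S ⊆ Finset.Icc 1 n ∧ ∀ m, 2 * (S.filter (· ≤ m)).card ≤ m

lemma Bal.card_le {n : ℕ} {S : Finset ℕ} (h : Bal n S) : 2 * S.card ≤ n := by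
  have := h.2 n
  rwa [Finset.filter_true_of_mem (fun x hx => (Finset.mem_Icc.1 (h.1 hx)).2)] at this

lemma Bal.notMem {n : ℕ} {S : Finset ℕ} (h : Bal (n + 1) S) (hn : n + 1 ∉ S) : Bal n S := by
  refine ⟨fun x hx => ?_, h.2⟩
  have h1 := Finset.mem_Icc.1 (h.1 hx)
  have h2 : x ≠ n + 1 := fun e => hn (e ▸ hx)
  exact Finset.mem_Icc.2 (by omega)

lemma Bal.erase {n : ℕ} {S : Finset ℕ} (h : Bal (n + 1) S) : Bal n (S.erase (n + 1)) := by
  refine ⟨fun x hx => ?_, fun m => le_trans ?_ (h.2 m)⟩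
  · have h1 := Finset.mem_Icc.1 (h.1 (Finset.mem_of_mem_erase hx))
    have h2 := Finset.ne_of_mem_erase hx
    exact Finset.mem_Icc.2 (by omega)
  · gcongr
    exact Finset.erase_subset _ _

lemma Bal.succ {n : ℕ} {S : Finset ℕ} (h : Bal n S) : Bal (n + 1) S :=
  ⟨h.1.trans (Finset.Icc_subset_Icc_right (by omega)), h.2⟩

lemma Bal.notMem_succ {n : ℕ} {S : Finset ℕ} (h : Bal n S) : n + 1 ∉ S := fun hn => by
  have := Finset.mem_Icc.1 (h.1 hn)
  omega

lemma Bal.insert {n : ℕ} {S : Finset ℕ} (h : Bal n S) (hc : 2 * (S.card + 1) ≤ n + 1) :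
    Bal (n + 1) (insert (n + 1) S) := by
  refine ⟨?_, fun m => ?_⟩
  · rw [Finset.insert_subset_iff]
    exact ⟨by simp, h.succ.1⟩
  · rw [Finset.filter_insert]
    split_ifs with hm
    · have h1 := Finset.card_insert_le (n + 1) (S.filter (· ≤ m))
      have h2 := Finset.card_filter_le S (· ≤ m)
      omega
    · exact h.2 m

lemma isH_iff {n k : ℕ} {S : Finset ℕ} : IsH n k S ↔ Bal n S ∧ S.card ≤ k := by
  -- `s_j` is the `j`-th element (from zero) in increasing order
  have key : ∀ j (hj : j < S.card), (S.sort (· ≤ ·)).getD j 0 = S.orderEmbOfFin rfl ⟨j, hj⟩ := by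
    intro j hj
    rw [Finset.orderEmbOfFin_apply, List.getD_eq_getElem _ _ (by simpa using hj)]
    rfl
  constructor
  · rintro ⟨h1, h2, h3⟩
    refine ⟨⟨h1, fun m => ?_⟩, h2⟩
    rcases Nat.eq_zero_or_pos (S.filter (· ≤ m)).card with h0 | h0
    · omega
    -- if `m < s_{c-1}`, then only the `c - 1` elements before `s_{c-1}` can be at most `m`
    set c := (S.filter (· ≤ m)).card with hc
    have hcS : c ≤ S.card := Finset.card_filter_le _ _
    have h4 := h3 (c - 1) (by omega)
    rw [key _ (by omega)] at h4
    by_contra hcon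
    have h5 : m < S.orderEmbOfFin rfl ⟨c - 1, by omega⟩ := by omega
    have h6 : S.filter (· ≤ m) ⊆ (Finset.univ.filter fun i : Fin S.card => i.1 < c - 1).image
        (S.orderEmbOfFin rfl) := by
      intro x hx
      rw [Finset.mem_filter] at hx
      have : x ∈ Set.range (S.orderEmbOfFin rfl) := by
        rw [Finset.range_orderEmbOfFin]; exact hx.1
      obtain ⟨i, rfl⟩ := this
      refine Finset.mem_image_of_mem _ ?_
      simp only [Finset.mem_filter, Finset.mem_univ, true_and]
      have := lt_of_le_of_lt hx.2 h5
      rw [OrderEmbedding.lt_iff_lt] at this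
      exact this
    have h7 := (Finset.card_le_card h6).trans Finset.card_image_le
    have h8 : (Finset.univ.filter fun i : Fin S.card => i.1 < c - 1).card ≤ c - 1 := by
      rw [← Finset.card_range (c - 1)]
      refine Finset.card_le_card_of_injOn (fun i => i.1) (fun i hi => ?_)
        (fun i _ j _ h => Fin.ext h)
      simpa using hi
    omega
  · rintro ⟨⟨h1, h2⟩, h3⟩
    refine ⟨h1, h3, fun j hj => ?_⟩
    rw [key j hj]
    refine le_trans ?_ (h2 _)
    gcongr
    rw [← Fintype.card_fin (j + 1), ← Finset.card_univ]
    refine Finset.card_le_card_of_injOn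
      (fun i => S.orderEmbOfFin rfl ⟨i.1, by omega⟩) (fun i _ => ?_) (fun i _ i' _ h => ?_)
    · simp only [Finset.coe_filter, Set.mem_ofPred_eq]
      refine ⟨Finset.orderEmbOfFin_mem _ _ _, (S.orderEmbOfFin rfl).monotone ?_⟩
      exact Fin.mk_le_mk.2 (by omega)
    · have := (S.orderEmbOfFin rfl).injective h
      simp only [Fin.mk.injEq] at this
      exact Fin.ext this

/-- The sets of size at most `k` satisfying the ballot condition, i.e. `H_{n,k}`. -/
noncomputable def ballotSets (n k : ℕ) : Finset (Finset ℕ) :=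
  (Finset.Icc 1 n).powerset.filter fun S => Bal n S ∧ S.card ≤ k

lemma mem_ballotSets {n k : ℕ} {S : Finset ℕ} : S ∈ ballotSets n k ↔ Bal n S ∧ S.card ≤ k := by
  simp only [ballotSets, Finset.mem_filter, Finset.mem_powerset, and_iff_right_iff_imp]
  exact fun h => h.1.1

lemma ballotSets_succ {n k : ℕ} (h : 2 * (k + 1) ≤ n + 1) :
    ballotSets (n + 1) (k + 1) =
      (ballotSets n (k + 1)) ∪ (ballotSets n k).image (insert (n + 1)) := by
  apply Finset.ext
  intro S
  simp only [Finset.mem_union, Finset.mem_image, mem_ballotSets]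
  constructor
  · rintro ⟨h1, h2⟩
    by_cases hS : n + 1 ∈ S
    · right
      refine ⟨S.erase (n + 1), ⟨h1.erase, ?_⟩, Finset.insert_erase hS⟩
      rw [Finset.card_erase_of_mem hS]; omega
    · exact Or.inl ⟨h1.notMem hS, h2⟩
  · rintro (⟨h1, h2⟩ | ⟨T, ⟨h1, h2⟩, rfl⟩)
    · exact ⟨h1.succ, h2⟩
    · exact ⟨h1.insert (by omega), (Finset.card_insert_le _ _).trans (by omega)⟩

lemma card_ballotSets (n k : ℕ) (h : 2 * k ≤ n + 1) : (ballotSets n k).card = n.choose k := by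
  induction n generalizing k with
  | zero =>
    obtain rfl : k = 0 := by omega
    rw [Nat.choose_self, Finset.card_eq_one]
    refine ⟨∅, Finset.ext fun S => ?_⟩
    rw [mem_ballotSets, Finset.mem_singleton]
    constructor
    · rintro ⟨-, h⟩; simpa using h
    · rintro rfl; simp [Bal]
  | succ n ih =>
    rcases k with _ | k
    · rw [Nat.choose_zero_right, Finset.card_eq_one]
      refine ⟨∅, Finset.ext fun S => ?_⟩
      rw [mem_ballotSets, Finset.mem_singleton]
      constructor
      · rintro ⟨-, h⟩; simpa using h
      · rintro rfl; simp [Bal]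
    · have pascal : ∀ k, 2 * (k + 1) ≤ n + 1 →
          (ballotSets (n + 1) (k + 1)).card = (n + 1).choose (k + 1) := by
        intro k hk
        rw [ballotSets_succ hk, Finset.card_union_of_disjoint, Finset.card_image_of_injOn,
          ih _ (by omega), ih _ (by omega), Nat.choose_succ_succ, add_comm]
        · intro S hS T hT hST
          have h1 := (mem_ballotSets.1 hS).1.notMem_succ
          have h2 := (mem_ballotSets.1 hT).1.notMem_succ
          rw [← Finset.erase_insert h1, ← Finset.erase_insert h2]
          exact congrArg (fun X => Finset.erase X (n + 1)) hST
        · rw [Finset.disjoint_left]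
          intro S hS hS'
          obtain ⟨T, -, rfl⟩ := Finset.mem_image.1 hS'
          exact (mem_ballotSets.1 hS).1.notMem_succ (Finset.mem_insert_self _ _)
      by_cases hk : 2 * (k + 1) ≤ n + 1
      · exact pascal k hk
      · -- here `n + 1 = 2k + 1`; no ballot set has size `k + 1`, and the two middle binomial
        -- coefficients agree
        have hn : n = 2 * k := by omega
        have h1 : ballotSets (n + 1) (k + 1) = ballotSets (n + 1) k := by
          apply Finset.ext
          intro S
          simp only [mem_ballotSets]
          constructor
          · rintro ⟨h1, -⟩
            have := h1.card_le
            exact ⟨h1, by omega⟩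
          · rintro ⟨h1, h2⟩
            exact ⟨h1, by omega⟩
        rw [h1, Nat.choose_symm_of_eq_add (show n + 1 = (k + 1) + k by omega)]
        rcases k with _ | k
        · rw [Nat.choose_zero_right, Finset.card_eq_one]
          refine ⟨∅, Finset.ext fun S => ?_⟩
          rw [mem_ballotSets, Finset.mem_singleton]
          constructor
          · rintro ⟨-, h⟩; simpa using h
          · rintro rfl; simp [Bal]
        · exact pascal k (by omega)

/-! ### Harmonicity and orthogonality of the `χ_S` -/

lemma charVec_harmonic {n : ℕ} {S : Finset ℕ} (h : Bal n S) : (U n)ᵀ *ᵥ charVec n S = 0 := by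
  induction n generalizing S with
  | zero =>
    funext x
    simp [mulVec_zero_dim, U]
  | succ n ih =>
    funext x
    rw [← app_eta x]
    by_cases hS : n + 1 ∈ S
    · have hE := ih h.erase
      cases x (Fin.last n)
      · have hne : (n : ℝ) - 2 * (S.erase (n + 1)).card ≠ 0 := by
          have h1 := Finset.card_erase_add_one hS
          have h2 := h.card_le
          have h3 : ((2 * (S.erase (n + 1)).card + 1 : ℕ) : ℝ) ≤ n := by
            exact_mod_cast (by omega)
          push_cast at h3
          intro h4
          linarith
        rw [D_false, charVec_mem_true hS]
        simp only [charVec_mem_false hS]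
        have h5 := down_up_pow (charVec_lev n (S.erase (n + 1))) hE 0
        simp only [zero_add, pow_one, pow_zero, one_mulVec] at h5
        have h6 : (fun y => -((U n *ᵥ charVec n (S.erase (n + 1))) y /
            ((n : ℝ) - 2 * (S.erase (n + 1)).card))) =
            (-(1 / ((n : ℝ) - 2 * (S.erase (n + 1)).card))) •
              (U n *ᵥ charVec n (S.erase (n + 1))) := by
          funext y
          simp only [Pi.smul_apply, smul_eq_mul]
          ring
        rw [h6, mulVec_smul, h5]
        simp
        field_simp
        ring
      · rw [D_true]
        simp only [charVec_mem_true hS]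
        rw [hE]
        rfl
    · cases x (Fin.last n)
      · rw [D_false, charVec_notMem_true hS]
        simp only [charVec_notMem_false hS]
        rw [ih (h.notMem hS)]
        simp
      · rw [D_true]
        simp only [charVec_notMem_true hS]
        exact congrFun (mulVec_zero _) _

lemma charVec_ne_zero {n : ℕ} {S : Finset ℕ} (h : Bal n S) : charVec n S ≠ 0 := by
  induction n generalizing S with
  | zero =>
    have h1 := h.card_le
    intro h0
    have h2 := congrFun h0 (fun _ => true)
    have h3 : (0 : ℕ) = S.card := by omega
    simp [charVec, ext, chi, wt, ← h3] at h2
  | succ n ih =>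
    by_cases hS : n + 1 ∈ S
    · intro h0
      refine ih h.erase (funext fun x => ?_)
      rw [← charVec_mem_true hS, h0]
      rfl
    · intro h0
      refine ih (h.notMem hS) (funext fun x => ?_)
      rw [← charVec_notMem_false hS, h0]
      rfl

lemma charVec_mem_false_fun {n : ℕ} {S : Finset ℕ} (h : n + 1 ∈ S) :
    (fun x => charVec (n + 1) S (app x false)) =
      (-(1 / ((n : ℝ) - 2 * (S.erase (n + 1)).card))) •
        (U n *ᵥ charVec n (S.erase (n + 1))) := by
  funext x
  rw [charVec_mem_false h]
  simp only [Pi.smul_apply, smul_eq_mul]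
  ring

/-- Orthogonality in the case where exactly one of the sets contains the last coordinate. -/
lemma charVec_orth_mixed {n : ℕ} {S T : Finset ℕ} (hT : Bal (n + 1) T)
    (hS' : n + 1 ∈ S) (hT' : n + 1 ∉ T) :
    charVec (n + 1) S ⬝ᵥ charVec (n + 1) T = 0 := by
  rw [dot_app, charVec_mem_false_fun hS']
  simp only [charVec_notMem_false hT', charVec_notMem_true hT', smul_dotProduct]
  rw [dotProduct_comm, dot_up, charVec_harmonic (hT.notMem hT')]
  simp [dotProduct]

lemma charVec_orth {n : ℕ} {S T : Finset ℕ} (hS : Bal n S) (hT : Bal n T) (hST : S ≠ T)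
    (hc : S.card = T.card) : charVec n S ⬝ᵥ charVec n T = 0 := by
  induction n generalizing S T with
  | zero =>
    refine absurd ?_ hST
    have h1 : S = ∅ := by simpa using hS.card_le
    have h2 : T = ∅ := by simpa using hT.card_le
    rw [h1, h2]
  | succ n ih =>
    by_cases hS' : n + 1 ∈ S <;> by_cases hT' : n + 1 ∈ T
    · have h1 := Finset.card_erase_add_one hS'
      have h2 := Finset.card_erase_add_one hT'
      have hne : S.erase (n + 1) ≠ T.erase (n + 1) := fun h => hST (by
        rw [← Finset.insert_erase hS', h, Finset.insert_erase hT'])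
      have h0 := ih hS.erase hT.erase hne (by omega)
      obtain ⟨c, -, hc'⟩ := dot_up_pow (charVec_lev n _) (charVec_harmonic hS.erase) 0 1
      have h3 := hc' (charVec n (T.erase (n + 1)))
      simp only [zero_add, pow_one, pow_zero, one_mulVec, h0, mul_zero] at h3
      rw [dot_app, charVec_mem_false_fun hS', charVec_mem_false_fun hT']
      simp only [charVec_mem_true hS', charVec_mem_true hT', smul_dotProduct, dotProduct_smul, h3]
      simpa using h0
    · exact charVec_orth_mixed hT hS' hT'
    · rw [dotProduct_comm]
      exact charVec_orth_mixed hS hT' hS'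
    · rw [dot_app]
      simp only [charVec_notMem_false hT', charVec_notMem_true hT', charVec_notMem_false hS',
        charVec_notMem_true hS']
      rw [ih (hS.notMem hS') (hT.notMem hT') hST hc]
      simp [dotProduct]

/-! ### The basis vectors -/

lemma basisVec_self {n k : ℕ} {S : Finset ℕ} (h : Bal n S) (h1 : S.card ≤ k)
    (h2 : S.card + k ≤ n) : 0 < ∑ x, basisVec n k S x * basisVec n k S x := by
  obtain ⟨c, hc, hg⟩ := dot_up_pow (charVec_lev n S) (charVec_harmonic h) 0 (k - S.card)
  have h3 := hg (charVec n S)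
  rw [zero_add, pow_zero, one_mulVec] at h3
  rw [ext_dot, ext_basisVec h1, h3]
  have h4 : 0 < charVec n S ⬝ᵥ charVec n S := by
    refine lt_of_le_of_ne (Finset.sum_nonneg fun x _ => mul_self_nonneg _) fun h5 => ?_
    exact charVec_ne_zero h (dotProduct_self_eq_zero.1 h5.symm)
  exact mul_pos (hc (by omega)) h4

lemma basisVec_orth_lt {n k : ℕ} {S T : Finset ℕ} (hS : Bal n S) (hT : Bal n T)
    (hk : T.card ≤ k) (hlt : S.card < T.card) :
    ∑ x, basisVec n k S x * basisVec n k T x = 0 := by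
  rw [ext_dot, ext_basisVec (by omega), ext_basisVec hk]
  have := dot_up_pow_ne (charVec_lev n S) (charVec_harmonic hS) (charVec_harmonic hT)
    (T.card - S.card - 1) (k - T.card)
  rwa [show T.card - S.card - 1 + 1 + (k - T.card) = k - S.card by omega] at this

lemma basisVec_orth {n k : ℕ} {S T : Finset ℕ} (hS : Bal n S) (hT : Bal n T)
    (hSk : S.card ≤ k) (hTk : T.card ≤ k) (hne : S ≠ T) :
    ∑ x, basisVec n k S x * basisVec n k T x = 0 := by
  rcases lt_trichotomy S.card T.card with h | h | h
  · exact basisVec_orth_lt hS hT hTk h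
  · obtain ⟨c, -, hc⟩ := dot_up_pow (charVec_lev n S) (charVec_harmonic hS) 0 (k - S.card)
    have h3 := hc (charVec n T)
    rw [zero_add, pow_zero, one_mulVec, charVec_orth hS hT hne h, mul_zero] at h3
    rw [ext_dot, ext_basisVec hSk, ext_basisVec hTk, ← h, h3]
  · rw [← basisVec_orth_lt hT hS hSk h]
    exact Finset.sum_congr rfl fun x _ => mul_comm _ _

lemma basisVec_eigen {n k : ℕ} {S : Finset ℕ} (hS : Bal n S) (hSk : S.card ≤ k) :
    ∃ μ : ℝ, johnsonAdj n k *ᵥ basisVec n k S = μ • basisVec n k S := by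
  obtain ⟨μ, hμ⟩ := A_eigen (charVec_lev n S) (charVec_harmonic hS) (k - S.card)
  refine ⟨μ, funext fun x => ?_⟩
  rw [← ext_basisVec hSk, ← ext_johnson] at hμ
  have := congrFun hμ x.1
  simpa only [Pi.smul_apply, ext_coe] using this

lemma card_slice (n k : ℕ) : Fintype.card (Slice n k) = n.choose k := by
  rw [← Fintype.card_fin n, ← Fintype.card_finset_len, Fintype.card_fin]
  refine Fintype.card_congr
    { toFun := fun x => ⟨Finset.univ.filter fun i => x.1 i = true, x.2⟩
      invFun := fun s => ⟨fun i => decide (i ∈ s.1), by simpa using s.2⟩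
      left_inv := fun x => by ext; simp
      right_inv := fun s => by ext; simp }

end SliceBasis

open SliceBasis in
/-- For `0 ≤ k ≤ n`, the vectors `P↑_{n,|S|,k} χ_{n,S}` for `S ∈ H_{n,min{k,n-k}}`
form an orthogonal basis of `R^{C([n],k)}` consisting of eigenvectors of the Johnson
graph's adjacency matrix `A_{n,k}`. -/
theorem stmt9 (n k : ℕ) (hk : k ≤ n) :
    (∀ S : Finset ℕ, IsH n (min k (n - k)) S → basisVec n k S ≠ 0) ∧
    (∀ S₁ S₂ : Finset ℕ, IsH n (min k (n - k)) S₁ → IsH n (min k (n - k)) S₂ →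
        S₁ ≠ S₂ → ∑ x, basisVec n k S₁ x * basisVec n k S₂ x = 0) ∧
    (∀ S : Finset ℕ, IsH n (min k (n - k)) S →
        ∃ μ : ℝ, (johnsonAdj n k).mulVec (basisVec n k S) = μ • basisVec n k S) ∧
    Submodule.span ℝ
        {v : Slice n k → ℝ | ∃ S : Finset ℕ, IsH n (min k (n - k)) S ∧ v = basisVec n k S}
      = ⊤ := by
  have hH : ∀ S, IsH n (min k (n - k)) S → Bal n S ∧ S.card ≤ k ∧ S.card + k ≤ n := by
    intro S hS
    obtain ⟨h1, h2⟩ := isH_iff.1 hS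
    exact ⟨h1, by omega, by omega⟩
  refine ⟨fun S hS h0 => ?_, fun S T hS hT hne => ?_, fun S hS => ?_, ?_⟩
  · obtain ⟨h1, h2, h3⟩ := hH S hS
    have := basisVec_self h1 h2 h3
    simp [h0] at this
  · exact basisVec_orth (hH S hS).1 (hH T hT).1 (hH S hS).2.1 (hH T hT).2.1 hne
  · exact basisVec_eigen (hH S hS).1 (hH S hS).2.1
  · set m := min k (n - k) with hm
    have hmem : ∀ S : ballotSets n m, IsH n m S.1 := fun S =>
      isH_iff.2 (mem_ballotSets.1 S.2)
    have hli : LinearIndependent ℝ (fun S : ballotSets n m => basisVec n k S.1) := by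
      rw [Fintype.linearIndependent_iff]
      intro g hg T
      -- pair the linear relation with the basis vector of `T`
      have h1 : ∑ x, (∑ S : ballotSets n m, g S • basisVec n k S.1) x * basisVec n k T.1 x = 0 := by
        rw [hg]; simp
      simp only [Finset.sum_apply, Pi.smul_apply, smul_eq_mul, Finset.sum_mul] at h1
      rw [Finset.sum_comm, Finset.sum_eq_single T] at h1
      · simp only [mul_assoc, ← Finset.mul_sum] at h1
        obtain ⟨h2, h3, h4⟩ := hH T.1 (hmem T)
        exact (mul_eq_zero.1 h1).resolve_right (basisVec_self h2 h3 h4).ne'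
      · intro S _ hST
        simp only [mul_assoc, ← Finset.mul_sum]
        rw [basisVec_orth (hH S.1 (hmem S)).1 (hH T.1 (hmem T)).1 (hH S.1 (hmem S)).2.1
          (hH T.1 (hmem T)).2.1 (fun h => hST (Subtype.ext h)), mul_zero]
      · simp
    have hcard : Fintype.card (ballotSets n m) = Module.finrank ℝ (Slice n k → ℝ) := by
      rw [Module.finrank_fintype_fun_eq_card, card_slice, Fintype.card_coe,
        card_ballotSets n m (by omega)]
      rcases min_choice k (n - k) with h | h
      · rw [hm, h]
      · rw [hm, h, Nat.choose_symm hk]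
    rw [eq_top_iff, ← hli.span_eq_top_of_card_eq_finrank' hcard]
    refine Submodule.span_mono ?_
    rintro _ ⟨S, rfl⟩
    exact ⟨S.1, hmem S, rfl⟩
end
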